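/- (Wang–Wu, case 1 < B < ∞) Let Φ : ℕ → ℝ⁺ be an arbitrary positive function with 1 < B < ∞, where log B = liminf_{n→∞} (log Φ(n))/n. Then the Hausdorff dimension of E_1(Φ) = { x ∈ [0,1) : a_n(x) ≥ Φ(n) for infinitely many n ∈ ℕ } equals s_B, where s_B = inf{ s ≥ 0 : lim_{n→∞} (1/n)·log( Σ_{(a_1,…,a_n)∈ℕ^n} B^{−n s} · q_n(a_1,…,a_n)^{−2s} ) ≤ 0 }. -/

import Mathlib

/-!
Write `A` for the set of `s ≥ 0` at which the pressure
`lim (1/n) log ∑ B ^ (-n s) q_n ^ (-2 s)` exists and is nonpositive, so that `s_B = inf A`. By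
submultiplicativity of the partition sums and Fekete's lemma, `s ∈ A` as soon as the partition sums
at `s` are bounded (`pressure_of_bounded`). At `s = 1` they are, because the cylinders of order `n`
are disjoint intervals of length at least `1 / (2 q_n ^ 2)` (`presSum_one_le`); hence `s_B ≤ 1`.

*Upper bound.* If `s ∈ A` and `s' > s`, some `b < B` makes the sums
`∑ b ^ (-n s') q_n ^ (-2 s')` summable in `n` (`exists_summable`). Eventually `Φ n ≥ b ^ n`, so
`E_1(Φ)` is covered, for every `N`, by the sets of points with a prescribed prefix of length
`n ≥ N` followed by a digit `≥ b ^ (n+1)`. Such a set has diameter at most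
`b ^ (-(n+1)) q_n ^ (-2)`, and therefore `dim E_1(Φ) ≤ s'` (`dimH_E1_le`).

*Lower bound.* If `0 < s ≤ 1` and `s ∉ A`, the partition sums at `s` are unbounded, so for any
constant `K` there are finitely many words of some length `N` with
`∑ q_N ^ (-2 s) > K B ^ (N s)` (`exists_words`). Concatenate independent random blocks of length
`N + 1`. An ordinary block is one of these words, chosen with probability proportional to
`q_N ^ (-2 s)`, followed by a `1`. On a very sparse set of indices, special blocks are used, which
consist of `1`s and one digit uniform in `[α, 2α)`; this digit sits at a position `n` with
`Φ n ≤ b ^ n`, where `b` is slightly larger than `B`, and `α` is the least natural number that is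
at least `b ^ n`. The resulting points lie in `E_1(Φ)`, apart from rational ones. Each ordinary
block gains a factor against `q ^ (-2 s)` large enough to pay, when special blocks are sparse, for
the loss, at most of order `α ^ s`, caused by a special digit (`growth`, `exists_sparse`). This
gives the cylinder estimates needed for the mass distribution principle (`dim_of_blocks`,
`mass_dim`): the measure of a set is `O(diam ^ s)`, by `measure_le_ediam`, where `cfLim_sep`
separates points with different digits. Hence `dim E_1(Φ) ≥ s` (`le_dimH_E1`).
-/

open Filter Topology MeasureTheory
open scoped ENNReal NNReal

/-- The Gauss map `T(x) = 1/x - ⌊1/x⌋` (with `T 0 = 0`). -/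
noncomputable def gaussMap (x : ℝ) : ℝ := if x = 0 then 0 else 1 / x - ⌊1 / x⌋

/-- The `n`-th partial quotient `a_n(x) = ⌊1 / T^[n-1] x⌋` of the continued fraction
expansion of `x` (for `n ≥ 1`). -/
noncomputable def cfA (n : ℕ) (x : ℝ) : ℕ := ⌊1 / gaussMap^[n - 1] x⌋₊

/-- The continuant `q_n(a_1, …, a_n)`, defined by `q_{-1} = 0`, `q_0 = 1`,
`q_k = a_k q_{k-1} + q_{k-2}`. -/
def contQ (l : List ℕ) : ℕ := (l.foldl (fun p a => (p.2, a * p.2 + p.1)) (0, 1)).2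

/-- The continuant numerator `p_n(a_1, …, a_n)`, defined by `p_{-1} = 1`, `p_0 = 0`,
`p_k = a_k p_{k-1} + p_{k-2}`. -/
def contP (l : List ℕ) : ℕ := (l.foldl (fun p a => (p.2, a * p.2 + p.1)) (1, 0)).2

/-- `q_n(x) = q_n(a_1(x), …, a_n(x))`. -/
noncomputable def cfQ (x : ℝ) (n : ℕ) : ℕ := contQ (List.ofFn fun i : Fin n => cfA (i + 1) x)

/-- `p_n(x) = p_n(a_1(x), …, a_n(x))`. -/
noncomputable def cfP (x : ℝ) (n : ℕ) : ℕ := contP (List.ofFn fun i : Fin n => cfA (i + 1) x)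

/-- The sum `Σ_{(a_1,…,a_n) ∈ ℕ^n} B^{-n c} · q_n(a_1,…,a_n)^{-2 s}` over all `n`-tuples
of positive integers, computed in `ℝ≥0∞`. -/
noncomputable def presSum (B c s : ℝ) (n : ℕ) : ℝ≥0∞ :=
  ∑' a : Fin n → ℕ+,
    ENNReal.ofReal (B ^ (-(n : ℝ) * c) *
      (contQ (List.ofFn fun i => (a i : ℕ)) : ℝ) ^ (-2 * s))

/-- `inf { s ≥ 0 : lim_{n→∞} (1/n) · log( Σ_{(a_1,…,a_n)∈ℕ^n} B^{-n·c(s)} q_n^{-2s} ) ≤ 0 }`,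
where the limit is required to exist (in `EReal`) and be `≤ 0`. -/
noncomputable def presInf (B : ℝ) (c : ℝ → ℝ) : ℝ :=
  sInf {s : ℝ | 0 ≤ s ∧ ∃ P : EReal, P ≤ 0 ∧
    Tendsto (fun n : ℕ => (((n : ℝ)⁻¹ : ℝ) : EReal) * ENNReal.log (presSum B (c s) s n))
      atTop (nhds P)}

/-- The set `E_1(Φ)` of irrational `x ∈ [0,1)` with `a_n(x) ≥ Φ(n)` for infinitely many `n`. -/
def E1 (Φ : ℕ → ℝ) : Set ℝ :=
  {x | x ∈ Set.Ico (0 : ℝ) 1 ∧ Irrational x ∧ ∃ᶠ n in atTop, Φ n ≤ (cfA n x : ℝ)}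

/-! ### Continuants and inverse branches of the Gauss map -/

/-- The continuant `q_{n-1}(a_1, …, a_{n-1})` attached to the word `a_1 … a_n`. -/
def contQ' (l : List ℕ) : ℕ := (l.foldl (fun p a => (p.2, a * p.2 + p.1)) (0, 1)).1

/-- The numerator `p_{n-1}(a_1, …, a_{n-1})` attached to the word `a_1 … a_n`. -/
def contP' (l : List ℕ) : ℕ := (l.foldl (fun p a => (p.2, a * p.2 + p.1)) (1, 0)).1

lemma foldl_lin (l : List ℕ) (x y : ℕ) :
    l.foldl (fun p a => (p.2, a * p.2 + p.1)) (x, y) =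
      (x * contP' l + y * contQ' l, x * contP l + y * contQ l) := by
  induction l generalizing x y with
  | nil => simp [contP, contQ, contP', contQ']
  | cons a l ih =>
    have h1 := ih y (a * y + x)
    have h2 := ih 0 1
    have h3 := ih 1 a
    simp only [List.foldl_cons, contP, contQ, contP', contQ'] at *
    simp only [mul_one, mul_zero, zero_add, add_zero] at *
    rw [h1, h3, Prod.mk.injEq]
    constructor <;> ring

@[simp] lemma contQ_nil : contQ [] = 1 := rfl
@[simp] lemma contQ'_nil : contQ' [] = 0 := rfl
@[simp] lemma contP_nil : contP [] = 0 := rfl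
@[simp] lemma contP'_nil : contP' [] = 1 := rfl

lemma contQ_cons (a : ℕ) (l : List ℕ) : contQ (a :: l) = a * contQ l + contP l := by
  have h := foldl_lin l 1 a
  rw [contQ, List.foldl_cons]
  simp only [mul_one, add_zero]
  rw [h]; ring

lemma contQ'_cons (a : ℕ) (l : List ℕ) : contQ' (a :: l) = a * contQ' l + contP' l := by
  have h := foldl_lin l 1 a
  rw [contQ', List.foldl_cons]
  simp only [mul_one, add_zero]
  rw [h]; ring

lemma contP_cons (a : ℕ) (l : List ℕ) : contP (a :: l) = contQ l := by
  simp [contP, contQ]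

lemma contP'_cons (a : ℕ) (l : List ℕ) : contP' (a :: l) = contQ' l := by
  simp [contP', contQ']

lemma contQ_append (u v : List ℕ) :
    contQ (u ++ v) = contQ u * contQ v + contQ' u * contP v := by
  have h := foldl_lin v (contQ' u) (contQ u)
  rw [contQ, List.foldl_append]
  simp only [contQ, contQ'] at h ⊢
  rw [h]; ring

lemma contQ_concat (u : List ℕ) (a : ℕ) : contQ (u ++ [a]) = a * contQ u + contQ' u := by
  simp [contQ_append, contQ_cons, contP_cons, mul_comm]

lemma contQ'_concat (u : List ℕ) (a : ℕ) : contQ' (u ++ [a]) = contQ u := by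
  simp [contQ, contQ', List.foldl_append]

lemma contQ_pos {l : List ℕ} (h : ∀ a ∈ l, 1 ≤ a) : 1 ≤ contQ l := by
  induction l with
  | nil => simp
  | cons a l ih =>
    have := ih (fun b hb => h b (by simp [hb]))
    have ha := h a (by simp)
    rw [contQ_cons]; nlinarith

lemma contP_le_contQ {l : List ℕ} (h : ∀ a ∈ l, 1 ≤ a) : contP l ≤ contQ l := by
  cases l with
  | nil => simp
  | cons a l =>
    have ha := h a (by simp)
    rw [contQ_cons, contP_cons]; nlinarith

lemma contQ'_le_contQ {l : List ℕ} (h : ∀ a ∈ l, 1 ≤ a) : contQ' l ≤ contQ l := by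
  induction l using List.reverseRecOn with
  | nil => simp
  | append_singleton u a ih =>
    have ha := h a (by simp)
    rw [contQ_concat, contQ'_concat]; nlinarith

lemma contQ_append_le {u v : List ℕ} (hu : ∀ a ∈ u, 1 ≤ a) (hv : ∀ a ∈ v, 1 ≤ a) :
    contQ (u ++ v) ≤ 2 * contQ u * contQ v := by
  rw [contQ_append]
  nlinarith [Nat.mul_le_mul (contQ'_le_contQ hu) (contP_le_contQ hv)]

lemma mul_le_contQ_append (u v : List ℕ) : contQ u * contQ v ≤ contQ (u ++ v) := by
  rw [contQ_append]; exact Nat.le_add_right _ _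

lemma contQ_concat_le {u : List ℕ} (hu : ∀ a ∈ u, 1 ≤ a) (a : ℕ) :
    contQ (u ++ [a]) ≤ (a + 1) * contQ u := by
  rw [contQ_concat]; nlinarith [contQ'_le_contQ hu]

/-- The value of the finite continued fraction `1/(a_1 + 1/(a_2 + ⋯ + 1/(a_n + t)))`. -/
noncomputable def mob : List ℕ → ℝ → ℝ
  | [], t => t
  | a :: l, t => 1 / (a + mob l t)

/-- The denominator `q_n + t q_{n-1}` of the Möbius map `mob l`. -/
noncomputable def den (l : List ℕ) (t : ℝ) : ℝ := contQ l + t * contQ' l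

lemma den_pos {l : List ℕ} (h : ∀ a ∈ l, 1 ≤ a) {t : ℝ} (ht : 0 ≤ t) : 0 < den l t := by
  have : (1 : ℝ) ≤ contQ l := by exact_mod_cast contQ_pos h
  have : 0 ≤ t * contQ' l := by positivity
  unfold den; linarith

lemma mob_mem {l : List ℕ} (h : ∀ a ∈ l, 1 ≤ a) {t : ℝ} (ht : t ∈ Set.Icc (0 : ℝ) 1) :
    mob l t ∈ Set.Icc (0 : ℝ) 1 := by
  induction l with
  | nil => simpa [mob] using ht
  | cons a l ih =>
    have h1 := ih (fun b hb => h b (by simp [hb]))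
    have ha : (1 : ℝ) ≤ a := by exact_mod_cast h a (by simp)
    have h0 := h1.1
    simp only [mob]
    constructor
    · positivity
    · rw [div_le_one (by linarith)]; linarith

lemma mob_mul_den {l : List ℕ} (h : ∀ a ∈ l, 1 ≤ a) {t : ℝ} (ht : t ∈ Set.Icc (0 : ℝ) 1) :
    mob l t * den l t = contP l + t * contP' l := by
  induction l with
  | nil => simp [mob, den]
  | cons a l ih =>
    have hl : ∀ b ∈ l, 1 ≤ b := fun b hb => h b (by simp [hb])
    have h1 := ih hl
    have h2 := (mob_mem hl ht).1
    have ha : (1 : ℝ) ≤ a := by exact_mod_cast h a (by simp)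
    have h3 : (a : ℝ) + mob l t ≠ 0 := by positivity
    have h4 : den (a :: l) t = (a + mob l t) * den l t := by
      have : den (a :: l) t = a * den l t + (contP l + t * contP' l) := by
        simp only [den, contQ_cons, contQ'_cons]; push_cast; ring
      rw [this, ← h1]; ring
    rw [h4, mob, contP_cons, contP'_cons]
    field_simp
    rfl

lemma den_cons {l : List ℕ} (hl : ∀ a ∈ l, 1 ≤ a) (a : ℕ) {t : ℝ} (ht : t ∈ Set.Icc (0 : ℝ) 1) :
    den (a :: l) t = (a + mob l t) * den l t := by
  have : den (a :: l) t = a * den l t + (contP l + t * contP' l) := by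
    simp only [den, contQ_cons, contQ'_cons]; push_cast; ring
  rw [this, ← mob_mul_den hl ht]; ring

/-- The exact distortion of the inverse branches of the iterated Gauss map. -/
lemma abs_mob_sub {l : List ℕ} (h : ∀ a ∈ l, 1 ≤ a) {t t' : ℝ} (ht : t ∈ Set.Icc (0 : ℝ) 1)
    (ht' : t' ∈ Set.Icc (0 : ℝ) 1) :
    |mob l t - mob l t'| = |t - t'| / (den l t * den l t') := by
  induction l with
  | nil => simp [mob, den]
  | cons a l ih =>
    have hl : ∀ b ∈ l, 1 ≤ b := fun b hb => h b (by simp [hb])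
    have ha : (1 : ℝ) ≤ a := by exact_mod_cast h a (by simp)
    have h1 := (mob_mem hl ht).1
    have h2 := (mob_mem hl ht').1
    have h3 : 0 < (a : ℝ) + mob l t := by positivity
    have h4 : 0 < (a : ℝ) + mob l t' := by positivity
    have d1 := den_pos hl ht.1
    have d2 := den_pos hl ht'.1
    rw [den_cons hl a ht, den_cons hl a ht', mob, mob]
    have : 1 / ((a : ℝ) + mob l t) - 1 / (a + mob l t') =
        -(mob l t - mob l t') / ((a + mob l t) * (a + mob l t')) := by
      field_simp; ring
    rw [this, abs_div, abs_neg, ih hl, abs_of_pos (mul_pos h3 h4)]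
    field_simp

lemma mob_append (u v : List ℕ) (t : ℝ) : mob (u ++ v) t = mob u (mob v t) := by
  induction u with
  | nil => simp [mob]
  | cons a u ih => simp [mob, ih]

lemma abs_mob_sub_le {l : List ℕ} (h : ∀ a ∈ l, 1 ≤ a) {t t' : ℝ} (ht : t ∈ Set.Icc (0 : ℝ) 1)
    (ht' : t' ∈ Set.Icc (0 : ℝ) 1) :
    |mob l t - mob l t'| ≤ |t - t'| / (contQ l : ℝ) ^ 2 := by
  rw [abs_mob_sub h ht ht']
  have h0 : (1 : ℝ) ≤ contQ l := by exact_mod_cast contQ_pos h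
  have h1 : (contQ l : ℝ) ≤ den l t := by
    have : 0 ≤ t * contQ' l := mul_nonneg ht.1 (by positivity)
    unfold den; linarith
  have h2 : (contQ l : ℝ) ≤ den l t' := by
    have : 0 ≤ t' * contQ' l := mul_nonneg ht'.1 (by positivity)
    unfold den; linarith
  have h3 : 0 ≤ den l t := by linarith
  rw [sq]
  gcongr

lemma le_abs_mob_sub {l : List ℕ} (h : ∀ a ∈ l, 1 ≤ a) {t t' : ℝ} (ht : t ∈ Set.Icc (0 : ℝ) 1)
    (ht' : t' ∈ Set.Icc (0 : ℝ) 1) :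
    |t - t'| / (4 * (contQ l : ℝ) ^ 2) ≤ |mob l t - mob l t'| := by
  rw [abs_mob_sub h ht ht']
  have h0 : (1 : ℝ) ≤ contQ l := by exact_mod_cast contQ_pos h
  have hq : (contQ' l : ℝ) ≤ contQ l := by exact_mod_cast contQ'_le_contQ h
  have key : ∀ t ∈ Set.Icc (0 : ℝ) 1, den l t ≤ 2 * contQ l := by
    intro t ht
    have : t * contQ' l ≤ 1 * contQ l :=
      mul_le_mul ht.2 hq (by positivity) (by norm_num)
    unfold den; linarith
  have d1 := den_pos h ht.1
  have d2 := den_pos h ht'.1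
  have : den l t * den l t' ≤ 4 * (contQ l : ℝ) ^ 2 := by
    calc _ ≤ (2 * contQ l : ℝ) * (2 * contQ l) := by gcongr <;> apply key <;> assumption
      _ = _ := by ring
  gcongr

/-! ### Partition sums and pressure -/

lemma one_le_of_mem_ofFn {n : ℕ} (a : Fin n → ℕ+) :
    ∀ x ∈ List.ofFn (fun i => (a i : ℕ)), 1 ≤ x := by
  intro x hx
  obtain ⟨i, rfl⟩ := (List.mem_ofFn' _ _).1 hx
  exact (a i).pos

lemma ofFn_append (n m : ℕ) (a : Fin n → ℕ+) (b : Fin m → ℕ+) :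
    List.ofFn (fun i => ((Fin.append a b i : ℕ+) : ℕ)) =
      List.ofFn (fun i => (a i : ℕ)) ++ List.ofFn (fun i => (b i : ℕ)) := by
  rw [← List.ofFn_fin_append]
  congr 1
  funext i
  refine Fin.addCases (fun i => ?_) (fun i => ?_) i <;> simp

lemma tsum_words_add (n m : ℕ) (F : List ℕ → ℝ≥0∞) :
    ∑' a : Fin (n + m) → ℕ+, F (List.ofFn fun i => (a i : ℕ)) =
      ∑' a : Fin n → ℕ+, ∑' b : Fin m → ℕ+,
        F ((List.ofFn fun i => (a i : ℕ)) ++ List.ofFn fun i => (b i : ℕ)) := by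
  rw [← (Fin.appendEquiv (α := ℕ+) n m).tsum_eq,
    ← ENNReal.tsum_prod (f := fun (a : Fin n → ℕ+) (b : Fin m → ℕ+) =>
        F ((List.ofFn fun i => (a i : ℕ)) ++ List.ofFn fun i => (b i : ℕ)))]
  refine tsum_congr fun p => ?_
  rw [← ofFn_append]
  rfl

lemma tsum_words_one (F : List ℕ → ℝ≥0∞) :
    ∑' b : Fin 1 → ℕ+, F (List.ofFn fun i => (b i : ℕ)) = ∑' k : ℕ, F [k + 1] := by
  rw [← (Equiv.funUnique (Fin 1) ℕ+).symm.tsum_eq, ← Equiv.pnatEquivNat.symm.tsum_eq]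
  refine tsum_congr fun k => ?_
  simp

/-- Submultiplicativity of the partition sums, from `q(u) q(v) ≤ q(u v)`. -/
lemma presSum_add_le {B c s : ℝ} (hB : 0 < B) (hs : 0 ≤ s) (n m : ℕ) :
    presSum B c s (n + m) ≤ presSum B c s n * presSum B c s m := by
  unfold presSum
  rw [tsum_words_add n m fun l => ENNReal.ofReal (B ^ (-((n + m : ℕ) : ℝ) * c) *
    (contQ l : ℝ) ^ (-2 * s))]
  simp_rw [← ENNReal.tsum_mul_right, ← ENNReal.tsum_mul_left]
  refine ENNReal.tsum_le_tsum fun a => ENNReal.tsum_le_tsum fun b => ?_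
  rw [← ENNReal.ofReal_mul (by positivity)]
  apply ENNReal.ofReal_le_ofReal
  set u := List.ofFn (fun i => (a i : ℕ))
  set v := List.ofFn (fun i => (b i : ℕ))
  have hu : (1 : ℝ) ≤ contQ u := by exact_mod_cast contQ_pos (one_le_of_mem_ofFn a)
  have hv : (1 : ℝ) ≤ contQ v := by exact_mod_cast contQ_pos (one_le_of_mem_ofFn b)
  have huv : (contQ u : ℝ) * contQ v ≤ contQ (u ++ v) := by
    exact_mod_cast mul_le_contQ_append u v
  have h1 : (contQ (u ++ v) : ℝ) ^ (-2 * s) ≤ (contQ u : ℝ) ^ (-2 * s) * (contQ v : ℝ) ^ (-2 * s) := by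
    rw [← Real.mul_rpow (by positivity) (by positivity)]
    exact Real.rpow_le_rpow_of_nonpos (by positivity) huv (by linarith)
  have h2 : B ^ (-((n + m : ℕ) : ℝ) * c) = B ^ (-(n : ℝ) * c) * B ^ (-(m : ℝ) * c) := by
    rw [← Real.rpow_add hB]; congr 1; push_cast; ring
  rw [h2]
  calc _ ≤ B ^ (-(n : ℝ) * c) * B ^ (-(m : ℝ) * c) *
        ((contQ u : ℝ) ^ (-2 * s) * (contQ v : ℝ) ^ (-2 * s)) := by gcongr
    _ = _ := by ring

lemma contQ_ones_le (n : ℕ) : contQ (List.replicate n 1) ≤ 2 ^ n := by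
  induction n with
  | zero => simp
  | succ n ih =>
    rw [List.replicate_succ']
    refine (contQ_concat_le (by simp) 1).trans ?_
    rw [pow_succ]; omega

lemma le_presSum {B c s : ℝ} (hB : 0 < B) (hs : 0 ≤ s) (n : ℕ) :
    ENNReal.ofReal ((B ^ (-c) * 2 ^ (-2 * s)) ^ n) ≤ presSum B c s n := by
  refine le_trans ?_ (ENNReal.le_tsum (fun _ : Fin n => (1 : ℕ+)))
  apply ENNReal.ofReal_le_ofReal
  have e : List.ofFn (fun _ : Fin n => ((1 : ℕ+) : ℕ)) = List.replicate n 1 := by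
    simp [List.ofFn_const]
  rw [e, mul_pow]
  have h1 : (B ^ (-c)) ^ n = B ^ (-(n : ℝ) * c) := by
    rw [← Real.rpow_natCast, ← Real.rpow_mul hB.le]; congr 1; ring
  have h2 : ((2 : ℝ) ^ (-2 * s)) ^ n = ((2 ^ n : ℕ) : ℝ) ^ (-2 * s) := by
    push_cast
    rw [← Real.rpow_natCast, ← Real.rpow_mul (by norm_num), ← Real.rpow_natCast,
      ← Real.rpow_mul (by norm_num)]; congr 1; ring
  rw [h1, h2]
  have h3 : (1 : ℝ) ≤ contQ (List.replicate n 1) := by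
    exact_mod_cast contQ_pos (by simp)
  gcongr ?_ * ?_
  exact Real.rpow_le_rpow_of_nonpos (by positivity) (by exact_mod_cast contQ_ones_le n)
    (by linarith)

lemma presSum_zero (B c s : ℝ) : presSum B c s 0 = 1 := by
  unfold presSum
  rw [tsum_fintype]
  simp

/-- If the partition sums stay bounded, then the pressure exists (Fekete) and is `≤ 0`. -/
lemma pressure_of_bounded {B s : ℝ} (hB : 0 < B) (hs : 0 ≤ s) {K : ℝ≥0∞} (hK : K ≠ ⊤)
    (h : ∀ n, presSum B s s n ≤ K) :
    ∃ P : EReal, P ≤ 0 ∧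
    Tendsto (fun n : ℕ => (((n : ℝ)⁻¹ : ℝ) : EReal) * ENNReal.log (presSum B s s n))
      atTop (nhds P) := by
  set ρ : ℝ := B ^ (-s) * 2 ^ (-2 * s) with hρ
  have hρ0 : 0 < ρ := by positivity
  have htop : ∀ n, presSum B s s n ≠ ⊤ := fun n => ne_top_of_le_ne_top hK (h n)
  have hlow : ∀ n, ρ ^ n ≤ (presSum B s s n).toReal := fun n =>
    (ENNReal.ofReal_le_iff_le_toReal (htop n)).1 (le_presSum hB hs n)
  have hpos : ∀ n, 0 < (presSum B s s n).toReal := fun n =>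
    lt_of_lt_of_le (by positivity) (hlow n)
  set u : ℕ → ℝ := fun n => Real.log (presSum B s s n).toReal with hu
  have hsub : Subadditive u := by
    intro m n
    simp only [hu]
    rw [← Real.log_mul (hpos m).ne' (hpos n).ne', ← ENNReal.toReal_mul]
    exact Real.log_le_log (hpos _)
      (ENNReal.toReal_mono (ENNReal.mul_ne_top (htop _) (htop _)) (presSum_add_le hB hs m n))
  have hbdd : BddBelow (Set.range fun n => u n / n) := by
    refine ⟨min 0 (Real.log ρ), ?_⟩
    rintro _ ⟨n, rfl⟩
    rcases Nat.eq_zero_or_pos n with rfl | hn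
    · simp
    · refine (min_le_right _ _).trans ?_
      have hn' : (0 : ℝ) < n := by exact_mod_cast hn
      rw [le_div_iff₀ hn', mul_comm, ← Real.log_pow]
      exact Real.log_le_log (by positivity) (hlow n)
  have hlim := hsub.tendsto_lim hbdd
  have hK1 : ∀ n, u n ≤ Real.log K.toReal := fun n =>
    Real.log_le_log (hpos n) (ENNReal.toReal_mono hK (h n))
  have hle : hsub.lim ≤ 0 := by
    have h2 : Tendsto (fun n : ℕ => Real.log K.toReal / n) atTop (𝓝 0) :=
      tendsto_const_div_atTop_nhds_zero_nat _
    refine le_of_tendsto_of_tendsto' hlim h2 fun n => ?_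
    have := hK1 n
    gcongr
  refine ⟨(hsub.lim : EReal), by exact_mod_cast hle, ?_⟩
  have := (continuous_coe_real_ereal.tendsto _).comp hlim
  refine this.congr fun n => ?_
  have e : ENNReal.log (presSum B s s n) = ((u n : ℝ) : EReal) := by
    simp only [hu]
    conv_lhs => rw [← ENNReal.ofReal_toReal (htop n)]
    exact ENNReal.log_ofReal_of_pos (hpos n)
  rw [e, ← EReal.coe_mul]
  simp only [Function.comp]
  congr 1
  rw [div_eq_inv_mul]

/-- The lengths `1/(q_n (q_n + q_{n-1}))` of the cylinders of order `n` sum to at most `1`. -/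
lemma tsum_cylinder_le (n : ℕ) :
    ∑' a : Fin n → ℕ+, ENNReal.ofReal (1 / ((contQ (List.ofFn fun i => (a i : ℕ)) : ℝ) *
      (contQ (List.ofFn fun i => (a i : ℕ)) + contQ' (List.ofFn fun i => (a i : ℕ))))) ≤ 1 := by
  induction n with
  | zero =>
    rw [tsum_fintype]
    simp
  | succ n ih =>
    rw [tsum_words_add n 1 fun l => ENNReal.ofReal (1 / ((contQ l : ℝ) * (contQ l + contQ' l)))]
    refine le_trans (ENNReal.tsum_le_tsum fun a => ?_) ih
    set u := List.ofFn (fun i => (a i : ℕ)) with hu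
    have h1 : (1 : ℝ) ≤ contQ u := by exact_mod_cast contQ_pos (one_le_of_mem_ofFn a)
    set q : ℝ := (contQ u : ℝ)
    set r : ℝ := (contQ' u : ℝ) with hr
    have hr0 : 0 ≤ r := by positivity
    rw [tsum_words_one fun l => ENNReal.ofReal (1 / ((contQ (u ++ l) : ℝ) *
      (contQ (u ++ l) + contQ' (u ++ l))))]
    have e : ∀ k : ℕ, 1 / ((contQ (u ++ [k + 1]) : ℝ) *
          (contQ (u ++ [k + 1]) + contQ' (u ++ [k + 1]))) =
        1 / (q * ((k + 1 : ℕ) * q + r)) - 1 / (q * ((k + 1 + 1 : ℕ) * q + r)) := by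
      intro k
      rw [contQ_concat, contQ'_concat]
      push_cast
      have hk : (0 : ℝ) < (k + 1) * q + r := by positivity
      have hk' : (0 : ℝ) < (k + 1 + 1) * q + r := by positivity
      have hk'' : (0 : ℝ) < (k + 1) * q + r + q := by positivity
      change 1 / ((((k : ℝ) + 1) * q + r) * (((k : ℝ) + 1) * q + r + q)) = _
      field_simp
      ring
    simp_rw [e]
    refine ENNReal.tsum_le_of_sum_range_le fun N => ?_
    rw [← ENNReal.ofReal_sum_of_nonneg]
    · rw [Finset.sum_range_sub' (fun k : ℕ => 1 / (q * ((k + 1 : ℕ) * q + r)))]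
      apply ENNReal.ofReal_le_ofReal
      have : 0 ≤ 1 / (q * ((N + 1 : ℕ) * q + r)) := by positivity
      simp only [zero_add, Nat.cast_one, one_mul]
      linarith
    · intro k _
      rw [sub_nonneg]
      gcongr
      omega

lemma presSum_one_le {B : ℝ} (hB : 1 < B) (n : ℕ) : presSum B 1 1 n ≤ 2 := by
  have h2 : (2 : ℝ≥0∞) = ENNReal.ofReal 2 := by simp
  calc presSum B 1 1 n
      ≤ ∑' a : Fin n → ℕ+, ENNReal.ofReal 2 * ENNReal.ofReal
        (1 / ((contQ (List.ofFn fun i => (a i : ℕ)) : ℝ) *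
      (contQ (List.ofFn fun i => (a i : ℕ)) + contQ' (List.ofFn fun i => (a i : ℕ))))) := by
        refine ENNReal.tsum_le_tsum fun a => ?_
        rw [← ENNReal.ofReal_mul (by norm_num)]
        apply ENNReal.ofReal_le_ofReal
        set u := List.ofFn (fun i => (a i : ℕ)) with hu
        have h1 : (1 : ℝ) ≤ contQ u := by exact_mod_cast contQ_pos (one_le_of_mem_ofFn a)
        have h3 : (contQ' u : ℝ) ≤ contQ u := by
          exact_mod_cast contQ'_le_contQ (one_le_of_mem_ofFn a)
        have h4 : B ^ (-(n : ℝ) * 1) ≤ 1 :=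
          Real.rpow_le_one_of_one_le_of_nonpos hB.le (by simp)
        have h5 : (contQ u : ℝ) ^ (-2 * (1 : ℝ)) = 1 / (contQ u : ℝ) ^ 2 := by
          rw [show (-2 * (1 : ℝ)) = -((2 : ℕ) : ℝ) by norm_num, Real.rpow_neg (by positivity),
            Real.rpow_natCast, one_div]
        rw [h5]
        calc _ ≤ 1 * (1 / (contQ u : ℝ) ^ 2) := by gcongr
          _ = 2 * (1 / (contQ u * (contQ u + contQ u))) := by field_simp; ring
          _ ≤ _ := by gcongr
    _ = 2 * _ := by rw [ENNReal.tsum_mul_left, ← h2]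
    _ ≤ 2 * 1 := by gcongr; exact tsum_cylinder_le n
    _ = 2 := by simp

/-! ### The upper bound -/

lemma gaussMap_spec {x : ℝ} (hx : x ∈ Set.Ioo (0 : ℝ) 1) (hi : Irrational x) :
    gaussMap x ∈ Set.Ioo (0 : ℝ) 1 ∧ Irrational (gaussMap x) ∧ 1 ≤ ⌊1 / x⌋₊ ∧
      x = 1 / ((⌊1 / x⌋₊ : ℝ) + gaussMap x) := by
  have hx0 : x ≠ 0 := hx.1.ne'
  have hg : gaussMap x = 1 / x - ⌊1 / x⌋ := by simp [gaussMap, hx0]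
  have hirr : Irrational (gaussMap x) := by
    rw [hg, one_div]
    exact hi.inv.sub_intCast _
  have h0 : 0 ≤ gaussMap x := by rw [hg]; linarith [Int.floor_le (1 / x)]
  have h1 : gaussMap x < 1 := by rw [hg]; linarith [Int.lt_floor_add_one (1 / x)]
  have hfl : ((⌊1 / x⌋₊ : ℕ) : ℝ) = ((⌊1 / x⌋ : ℤ) : ℝ) :=
    natCast_floor_eq_intCast_floor (by have := hx.1; positivity)
  refine ⟨⟨lt_of_le_of_ne h0 (fun h => hirr ⟨0, by simp [h]⟩), h1⟩, hirr, ?_, ?_⟩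
  · rw [Nat.one_le_floor_iff, le_div_iff₀ hx.1]; linarith [hx.2]
  · rw [hfl, hg]; simp

lemma gaussMap_iterate {x : ℝ} (hx : x ∈ Set.Ioo (0 : ℝ) 1) (hi : Irrational x) (n : ℕ) :
    gaussMap^[n] x ∈ Set.Ioo (0 : ℝ) 1 ∧ Irrational (gaussMap^[n] x) := by
  induction n with
  | zero => exact ⟨hx, hi⟩
  | succ n ih =>
    rw [Function.iterate_succ_apply']
    obtain ⟨h1, h2, -, -⟩ := gaussMap_spec ih.1 ih.2
    exact ⟨h1, h2⟩

lemma eq_mob_cfA {x : ℝ} (hx : x ∈ Set.Ioo (0 : ℝ) 1) (hi : Irrational x) (n : ℕ) :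
    x = mob (List.ofFn fun i : Fin n => cfA (i + 1) x) (gaussMap^[n] x) := by
  induction n with
  | zero => simp [mob]
  | succ n ih =>
    obtain ⟨h1, h2⟩ := gaussMap_iterate hx hi n
    obtain ⟨-, -, -, h3⟩ := gaussMap_spec h1 h2
    rw [List.ofFn_succ_last, mob_append]
    simp only [Fin.val_castSucc, Fin.val_last, mob]
    rw [Function.iterate_succ_apply']
    have : cfA (n + 1) x = ⌊1 / gaussMap^[n] x⌋₊ := rfl
    rw [this, ← h3]
    exact ih

lemma one_le_cfA {x : ℝ} (hx : x ∈ Set.Ioo (0 : ℝ) 1) (hi : Irrational x) (n : ℕ) :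
    1 ≤ cfA (n + 1) x := by
  obtain ⟨h1, h2⟩ := gaussMap_iterate hx hi n
  exact (gaussMap_spec h1 h2).2.2.1

/-- The natural covering of `E_1(Φ)`, by the sets of points with a prescribed prefix
`a_1, …, a_k` and `a_{k+1} ≥ b ^ (k+1)`. -/
lemma dimH_E1_le {Φ : ℕ → ℝ} {b s : ℝ} (hb : 1 < b) (hs : 0 < s)
    (hΦ : ∀ᶠ n in atTop, b ^ n ≤ Φ n) {N₀ : ℕ} (hsum : ∑' k, presSum b s s (k + N₀) ≠ ⊤) :
    dimH (E1 Φ) ≤ ENNReal.ofReal s := by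
  have hb0 : 0 < b := by linarith
  set c : ℝ≥0 := s.toNNReal with hc
  have hcs : (c : ℝ) = s := Real.coe_toNNReal _ hs.le
  refine dimH_le_of_hausdorffMeasure_ne_top (d := c) ?_
  rw [hcs]
  set t : ∀ N : ℕ, (Σ n : ℕ, Fin (n + N) → ℕ+) → Set ℝ := fun N p =>
    mob (List.ofFn fun i => (p.2 i : ℕ)) '' Set.Icc 0 ((b ^ (p.1 + N + 1))⁻¹) with ht
  have hdiam : ∀ N p, Metric.ediam (t N p) ≤ ENNReal.ofReal
      ((b ^ (p.1 + N + 1))⁻¹ / (contQ (List.ofFn fun i => (p.2 i : ℕ)) : ℝ) ^ 2) := by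
    rintro N ⟨n, a⟩
    refine Metric.ediam_le ?_
    rintro _ ⟨x, hx, rfl⟩ _ ⟨y, hy, rfl⟩
    have hle : (b ^ (n + N + 1))⁻¹ ≤ 1 := inv_le_one_of_one_le₀ (one_le_pow₀ hb.le)
    rw [edist_dist, Real.dist_eq]
    apply ENNReal.ofReal_le_ofReal
    refine (abs_mob_sub_le (one_le_of_mem_ofFn a) ⟨hx.1, hx.2.trans hle⟩
      ⟨hy.1, hy.2.trans hle⟩).trans ?_
    gcongr
    rw [abs_le]
    constructor <;> linarith [hx.1, hx.2, hy.1, hy.2]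
  have key := Measure.hausdorffMeasure_le_liminf_tsum (ι := fun N => Σ n : ℕ, Fin (n + N) → ℕ+) s
    (E1 Φ) (l := atTop) (fun N : ℕ => ENNReal.ofReal ((b ^ N)⁻¹)) ?_ t ?_ ?_
  · refine ne_top_of_le_ne_top hsum (key.trans ?_)
    refine liminf_le_of_frequently_le' ((eventually_ge_atTop N₀).frequently.mono fun N hN => ?_)
    obtain ⟨j, rfl⟩ := Nat.exists_eq_add_of_le' hN
    rw [ENNReal.tsum_sigma']
    refine le_trans (ENNReal.tsum_le_tsum fun n => ?_)
      (ENNReal.tsum_comp_le_tsum_of_injective (add_left_injective j)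
        (fun k => presSum b s s (k + N₀)))
    rw [add_assoc]
    refine ENNReal.tsum_le_tsum fun a => ?_
    have h1 : (1 : ℝ) ≤ contQ (List.ofFn fun i => (a i : ℕ)) := by
      exact_mod_cast contQ_pos (one_le_of_mem_ofFn a)
    set q : ℝ := (contQ (List.ofFn fun i => (a i : ℕ)) : ℝ) with hq
    refine (ENNReal.rpow_le_rpow (hdiam (j + N₀) ⟨n, a⟩) hs.le).trans ?_
    rw [ENNReal.ofReal_rpow_of_nonneg (by positivity) hs.le]
    apply ENNReal.ofReal_le_ofReal
    simp only
    rw [← hq]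
    have e : b ^ (-((n + (j + N₀) : ℕ) : ℝ) * s) * q ^ (-2 * s) = ((b ^ (n + (j + N₀)))⁻¹ / q ^ 2) ^ s := by
      rw [div_eq_mul_inv, Real.mul_rpow (by positivity) (by positivity)]
      congr 1
      · rw [Real.rpow_mul hb0.le, Real.rpow_neg hb0.le, Real.rpow_natCast]
      · rw [Real.rpow_mul (by positivity), Real.rpow_neg (by positivity)]
        norm_cast
    rw [e]
    have h2 : b ^ (n + (j + N₀)) ≤ b ^ (n + (j + N₀) + 1) := pow_le_pow_right₀ hb.le (by omega)
    gcongr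
  · have : Tendsto (fun N : ℕ => (b ^ N)⁻¹) atTop (𝓝 0) := by
      exact tendsto_inv_atTop_zero.comp (tendsto_pow_atTop_atTop_of_one_lt hb)
    simpa using ENNReal.tendsto_ofReal this
  · refine Eventually.of_forall ?_
    rintro N ⟨n, a⟩
    refine (hdiam N ⟨n, a⟩).trans (ENNReal.ofReal_le_ofReal ?_)
    have h1 : (1 : ℝ) ≤ contQ (List.ofFn fun i => (a i : ℕ)) := by
      exact_mod_cast contQ_pos (one_le_of_mem_ofFn a)
    refine (div_le_self (by positivity) (one_le_pow₀ h1)).trans ?_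
    simp only
    gcongr
    · exact hb.le
    · omega
  · refine Eventually.of_forall fun N => ?_
    rintro x ⟨hx, hi, hfreq⟩
    have hx' : x ∈ Set.Ioo (0 : ℝ) 1 :=
      ⟨lt_of_le_of_ne hx.1 (fun h => hi ⟨0, by simp [← h]⟩), hx.2⟩
    obtain ⟨m, hm1, hm2, hm3⟩ := (hfreq.and_eventually (hΦ.and (eventually_ge_atTop (N + 1)))).exists
    obtain ⟨n, rfl⟩ : ∃ n, m = n + N + 1 := ⟨m - N - 1, by omega⟩
    refine Set.mem_iUnion.2 ⟨⟨n, fun i => ⟨cfA (i + 1) x, one_le_cfA hx' hi i⟩⟩, ?_⟩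
    refine ⟨gaussMap^[n + N] x, ⟨(gaussMap_iterate hx' hi _).1.1.le, ?_⟩, ?_⟩
    · have h0 := (gaussMap_iterate hx' hi (n + N)).1.1
      have h1 : b ^ (n + N + 1) ≤ 1 / gaussMap^[n + N] x :=
        (hm2.trans hm1).trans (Nat.floor_le (by positivity))
      rw [one_div] at h1
      exact le_inv_of_le_inv₀ (by positivity) h1
    · exact (eq_mob_cfA hx' hi (n + N)).symm

/-- If the pressure is nonpositive at `s`, then at any `s' > s` and for some `b < B` the partition
sums decay geometrically: `b ^ (-n s') q ^ (-2 s') ≤ r ^ n · B ^ (-n s) q ^ (-2 s)` with `r < 1`. -/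
lemma exists_summable {B s s' : ℝ} (hB : 1 < B) (hs : 0 ≤ s) (hss : s < s')
    (h : ∃ P : EReal, P ≤ 0 ∧
      Tendsto (fun n : ℕ => (((n : ℝ)⁻¹ : ℝ) : EReal) * ENNReal.log (presSum B s s n))
        atTop (nhds P)) :
    ∃ θ : ℝ, 0 < θ ∧ θ < 1 ∧ ∃ N₀ : ℕ, ∑' k, presSum (B ^ θ) s' s' (k + N₀) ≠ ⊤ := by
  have hB0 : 0 < B := by linarith
  have hs' : 0 < s' := by linarith
  obtain ⟨θ, hθ1, hθ2⟩ := exists_between ((div_lt_one hs').2 hss)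
  have hθ0 : 0 < θ := lt_of_le_of_lt (by positivity) hθ1
  rw [div_lt_iff₀ hs'] at hθ1
  refine ⟨θ, hθ0, hθ2, ?_⟩
  set η : ℝ := θ * s' - s with hη
  have hη0 : 0 < η := by linarith
  obtain ⟨P, hP0, hP⟩ := h
  have hev : ∀ᶠ n : ℕ in atTop, presSum B s s n ≤ ENNReal.ofReal ((B ^ (η / 2)) ^ n) := by
    have hlt : P < ((η / 2 * Real.log B : ℝ) : EReal) := lt_of_le_of_lt hP0
      (by have := Real.log_pos hB; exact_mod_cast (by positivity : 0 < η / 2 * Real.log B))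
    filter_upwards [hP.eventually (gt_mem_nhds hlt), eventually_gt_atTop 0] with n hn hn0
    have hn0' : (0 : ℝ) < n := by exact_mod_cast hn0
    have e : ((η / 2 * Real.log B : ℝ) : EReal) = ENNReal.log (ENNReal.ofReal (B ^ (η / 2))) := by
      rw [ENNReal.log_ofReal_of_pos (by positivity), Real.log_rpow hB0]
    rw [e, ← ENNReal.log_rpow, ENNReal.log_lt_log_iff] at hn
    have := ENNReal.rpow_le_rpow hn.le hn0'.le
    rw [← ENNReal.rpow_mul, inv_mul_cancel₀ hn0'.ne', ENNReal.rpow_one, ENNReal.rpow_natCast,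
      ← ENNReal.ofReal_pow (by positivity)] at this
    exact this
  have hcmp : ∀ n, presSum (B ^ θ) s' s' n ≤ ENNReal.ofReal ((B ^ (-η)) ^ n) * presSum B s s n := by
    intro n
    unfold presSum
    rw [← ENNReal.tsum_mul_left]
    refine ENNReal.tsum_le_tsum fun a => ?_
    rw [← ENNReal.ofReal_mul (by positivity)]
    apply ENNReal.ofReal_le_ofReal
    have h1 : (1 : ℝ) ≤ contQ (List.ofFn fun i => (a i : ℕ)) := by
      exact_mod_cast contQ_pos (one_le_of_mem_ofFn a)
    rw [← mul_assoc]
    have e : (B ^ (-η)) ^ n * B ^ (-(n : ℝ) * s) = (B ^ θ) ^ (-(n : ℝ) * s') := by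
      rw [← Real.rpow_natCast, ← Real.rpow_mul hB0.le, ← Real.rpow_mul hB0.le,
        ← Real.rpow_add hB0]
      congr 1
      rw [hη]; ring
    rw [e]
    refine mul_le_mul_of_nonneg_left ?_ (by positivity)
    exact Real.rpow_le_rpow_of_exponent_le h1 (by linarith)
  obtain ⟨N₀, hN₀⟩ := eventually_atTop.1 hev
  refine ⟨N₀, ?_⟩
  have hr : B ^ (-(η / 2)) < 1 := Real.rpow_lt_one_of_one_lt_of_neg hB (by linarith)
  have hle : ∀ k, presSum (B ^ θ) s' s' (k + N₀) ≤ ENNReal.ofReal (B ^ (-(η / 2))) ^ k := by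
    intro k
    refine (hcmp _).trans ((mul_le_mul_right (hN₀ (k + N₀) (by omega)) _).trans ?_)
    rw [← ENNReal.ofReal_mul (by positivity), ← ENNReal.ofReal_pow (by positivity), ← mul_pow,
      ← Real.rpow_add hB0]
    apply ENNReal.ofReal_le_ofReal
    rw [show -η + η / 2 = -(η / 2) by ring]
    exact pow_le_pow_of_le_one (by positivity) hr.le (by omega)
  refine ne_top_of_le_ne_top ?_ (ENNReal.tsum_le_tsum hle)
  rw [ENNReal.tsum_geometric]
  simp only [ne_eq, ENNReal.inv_eq_top, tsub_eq_zero_iff_le, not_le]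
  rwa [ENNReal.ofReal_lt_one]

/-! ### Infinite continued fractions with prescribed digits -/

/-- The word formed by the first `n` terms of a digit sequence. -/
def pre (d : ℕ → ℕ) (n : ℕ) : List ℕ := List.ofFn fun i : Fin n => d i

lemma pre_succ (d : ℕ → ℕ) (n : ℕ) : pre d (n + 1) = pre d n ++ [d n] := by
  unfold pre
  rw [List.ofFn_succ_last]
  rfl

lemma pre_add (d : ℕ → ℕ) (n m : ℕ) : pre d (n + m) = pre d n ++ pre (fun i => d (n + i)) m := by
  simp [pre, List.ofFn_add]

lemma pre_congr {d d' : ℕ → ℕ} {n : ℕ} (h : ∀ i < n, d i = d' i) : pre d n = pre d' n := by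
  unfold pre
  congr 1
  funext i
  exact h i i.2

lemma one_le_of_mem_pre {d : ℕ → ℕ} (hd : ∀ i, 1 ≤ d i) (n : ℕ) : ∀ a ∈ pre d n, 1 ≤ a := by
  intro a ha
  obtain ⟨i, rfl⟩ := (List.mem_ofFn' _ _).1 ha
  exact hd i

lemma contQ_pre_ge {d : ℕ → ℕ} (hd : ∀ i, 1 ≤ d i) (n : ℕ) : n ≤ contQ (pre d n) := by
  suffices h : ∀ n, n ≤ contQ (pre d n) ∧ n + 1 ≤ contQ (pre d (n + 1)) from (h n).1
  intro n
  induction n with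
  | zero => exact ⟨by simp, contQ_pos (one_le_of_mem_pre hd _)⟩
  | succ n ih =>
    refine ⟨ih.2, ?_⟩
    rw [pre_succ, contQ_concat, pre_succ, contQ'_concat, ← pre_succ]
    have := contQ_pos (one_le_of_mem_pre hd n)
    nlinarith [hd (n + 1), ih.2]

/-- The convergents of the continued fraction with digits `d`. -/
noncomputable def convs (d : ℕ → ℕ) (n : ℕ) : ℝ := mob (pre d n) 0

/-- The value of the infinite continued fraction `[d 0, d 1, …]`. -/
noncomputable def cfLim (d : ℕ → ℕ) : ℝ := limUnder atTop (convs d)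

lemma convs_mem {d : ℕ → ℕ} (hd : ∀ i, 1 ≤ d i) (n : ℕ) : convs d n ∈ Set.Icc (0 : ℝ) 1 :=
  mob_mem (one_le_of_mem_pre hd n) (by simp)

lemma convs_add (d : ℕ → ℕ) (n m : ℕ) :
    convs d (n + m) = mob (pre d n) (convs (fun i => d (n + i)) m) := by
  rw [convs, pre_add, mob_append]; rfl

lemma abs_sub_le_one {x y : ℝ} (hx : x ∈ Set.Icc (0 : ℝ) 1) (hy : y ∈ Set.Icc (0 : ℝ) 1) :
    |x - y| ≤ 1 := by
  rw [abs_le]; constructor <;> linarith [hx.1, hx.2, hy.1, hy.2]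

lemma tendsto_convs {d : ℕ → ℕ} (hd : ∀ i, 1 ≤ d i) :
    Tendsto (convs d) atTop (𝓝 (cfLim d)) := by
  have hc : CauchySeq (convs d) := by
    refine cauchySeq_of_le_tendsto_0' (fun n : ℕ => 2 * (1 / ((n : ℝ) + 1))) ?_ ?_
    · intro n m hnm
      obtain ⟨k, rfl⟩ := Nat.exists_eq_add_of_le hnm
      rw [Real.dist_eq, convs_add, convs]
      refine (abs_mob_sub_le (one_le_of_mem_pre hd n) (by simp)
        (convs_mem (fun i => hd _) k)).trans ?_
      have h1 : (n : ℝ) ≤ contQ (pre d n) := by exact_mod_cast contQ_pre_ge hd n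
      have h2 : (1 : ℝ) ≤ contQ (pre d n) := by
        exact_mod_cast contQ_pos (one_le_of_mem_pre hd n)
      have h3 := abs_sub_le_one (show (0 : ℝ) ∈ Set.Icc (0 : ℝ) 1 by simp)
        (convs_mem (d := fun i => d (n + i)) (fun i => hd _) k)
      have h4 : (n : ℝ) + 1 ≤ 2 * (contQ (pre d n) : ℝ) ^ 2 := by nlinarith
      rw [mul_one_div, div_le_div_iff₀ (by positivity) (by positivity)]
      nlinarith [abs_nonneg ((0 : ℝ) - convs (fun i => d (n + i)) k)]
    · simpa using tendsto_one_div_add_atTop_nhds_zero_nat (𝕜 := ℝ).const_mul 2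
  exact hc.tendsto_limUnder

lemma cfLim_mem {d : ℕ → ℕ} (hd : ∀ i, 1 ≤ d i) : cfLim d ∈ Set.Icc (0 : ℝ) 1 :=
  isClosed_Icc.mem_of_tendsto (tendsto_convs hd) (Eventually.of_forall (convs_mem hd))

lemma cfLim_eq_mob {d : ℕ → ℕ} (hd : ∀ i, 1 ≤ d i) (n : ℕ) :
    cfLim d = mob (pre d n) (cfLim fun i => d (n + i)) := by
  have hd' : ∀ i, 1 ≤ (fun i => d (n + i)) i := fun i => hd _
  have h1 : Tendsto (fun m => convs d (n + m)) atTop (𝓝 (cfLim d)) := by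
    simp_rw [add_comm n]
    exact (tendsto_add_atTop_iff_nat n).2 (tendsto_convs hd)
  refine tendsto_nhds_unique h1 ?_
  simp_rw [convs_add]
  rw [tendsto_iff_dist_tendsto_zero]
  have h2 := tendsto_iff_dist_tendsto_zero.1 (tendsto_convs hd')
  refine squeeze_zero (fun _ => dist_nonneg) (fun m => ?_) h2
  rw [Real.dist_eq, Real.dist_eq]
  refine (abs_mob_sub_le (one_le_of_mem_pre hd n) (convs_mem hd' m) (cfLim_mem hd')).trans ?_
  refine div_le_self (abs_nonneg _) (one_le_pow₀ ?_)
  exact_mod_cast contQ_pos (one_le_of_mem_pre hd n)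

lemma cfLim_eq {d : ℕ → ℕ} (hd : ∀ i, 1 ≤ d i) :
    cfLim d = 1 / (d 0 + cfLim fun i => d (1 + i)) := by
  have := cfLim_eq_mob hd 1
  simpa [pre, mob] using this

lemma cfLim_ge {d : ℕ → ℕ} (hd : ∀ i, 1 ≤ d i) : 1 / ((d 0 : ℝ) + 1) ≤ cfLim d := by
  have hm := cfLim_mem (d := fun i => d (1 + i)) (fun i => hd _)
  have h0 : (1 : ℝ) ≤ d 0 := by exact_mod_cast hd 0
  have h1 := hm.1
  rw [cfLim_eq hd]
  gcongr
  exact hm.2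

lemma cfLim_pos {d : ℕ → ℕ} (hd : ∀ i, 1 ≤ d i) : 0 < cfLim d :=
  lt_of_lt_of_le (by positivity) (cfLim_ge hd)

lemma cfLim_lt_one {d : ℕ → ℕ} (hd : ∀ i, 1 ≤ d i) : cfLim d < 1 := by
  have hm := cfLim_pos (d := fun i => d (1 + i)) (fun i => hd _)
  have h0 : (1 : ℝ) ≤ d 0 := by exact_mod_cast hd 0
  rw [cfLim_eq hd, div_lt_one (by positivity)]
  linarith

lemma floor_cfLim {d : ℕ → ℕ} (hd : ∀ i, 1 ≤ d i) : ⌊1 / cfLim d⌋₊ = d 0 := by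
  have h0 := cfLim_pos (d := fun i => d (1 + i)) (fun i => hd _)
  have h1 := cfLim_lt_one (d := fun i => d (1 + i)) (fun i => hd _)
  rw [cfLim_eq hd, one_div_one_div, Nat.floor_eq_iff (by positivity)]
  constructor <;> linarith

lemma gaussMap_cfLim {d : ℕ → ℕ} (hd : ∀ i, 1 ≤ d i) :
    gaussMap (cfLim d) = cfLim fun i => d (1 + i) := by
  have hp := cfLim_pos hd
  have hfl : ((⌊1 / cfLim d⌋₊ : ℕ) : ℝ) = ((⌊1 / cfLim d⌋ : ℤ) : ℝ) :=
    natCast_floor_eq_intCast_floor (by positivity)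
  rw [gaussMap, if_neg hp.ne', ← hfl, floor_cfLim hd, cfLim_eq hd, one_div_one_div]
  ring

lemma gaussMap_iterate_cfLim {d : ℕ → ℕ} (hd : ∀ i, 1 ≤ d i) (n : ℕ) :
    gaussMap^[n] (cfLim d) = cfLim fun i => d (n + i) := by
  induction n with
  | zero => simp
  | succ n ih =>
    rw [Function.iterate_succ_apply', ih, gaussMap_cfLim (fun i => hd _)]
    congr 1
    funext i
    congr 1
    ring

lemma cfA_cfLim {d : ℕ → ℕ} (hd : ∀ i, 1 ≤ d i) (n : ℕ) : cfA (n + 1) (cfLim d) = d n := by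
  rw [cfA, Nat.add_sub_cancel, gaussMap_iterate_cfLim hd, floor_cfLim (fun i => hd _)]
  simp

/-- Two continued fractions whose digits first differ at index `n` are far apart, provided the
larger of the two digits (at most `D - 1`) is followed by a digit at most `M`: the bound on that
next digit keeps the points away from the common endpoint of adjacent cylinders. -/
lemma cfLim_sep {d d' : ℕ → ℕ} (hd : ∀ i, 1 ≤ d i) (hd' : ∀ i, 1 ≤ d' i) {n M D : ℕ}
    (hag : ∀ i < n, d i = d' i) (hlt : d n < d' n) (hM' : d' (n + 1) ≤ M)
    (hD : d' n + 1 ≤ D) :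
    ((d' n : ℝ) - d n) / (4 * (M + 1) * (D : ℝ) ^ 2 * (contQ (pre d n) : ℝ) ^ 2) ≤
      |cfLim d - cfLim d'| := by
  set e : ℕ → ℕ := fun i => d (n + i) with he_def
  set e' : ℕ → ℕ := fun i => d' (n + i) with he'_def
  have he : ∀ i, 1 ≤ e i := fun i => hd _
  have he' : ∀ i, 1 ≤ e' i := fun i => hd' _
  rw [cfLim_eq_mob hd n, cfLim_eq_mob hd' n, ← pre_congr hag]
  refine le_trans ?_ (le_abs_mob_sub (one_le_of_mem_pre hd n) (cfLim_mem he) (cfLim_mem he'))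
  set θ := cfLim fun i => e (1 + i) with hθ
  set φ := cfLim fun i => e' (1 + i) with hφ
  have hθm := cfLim_mem (d := fun i => e (1 + i)) (fun i => he _)
  have hφm := cfLim_mem (d := fun i => e' (1 + i)) (fun i => he' _)
  have hφ' := cfLim_ge (d := fun i => e' (1 + i)) (fun i => he' _)
  rw [← hφ] at hφ' hφm
  rw [← hθ] at hθm
  have hM1 : ((e' (1 + 0) : ℕ) : ℝ) ≤ M := by exact_mod_cast hM'
  have hφM : 1 / ((M : ℝ) + 1) ≤ φ := le_trans (by gcongr) hφ'
  rw [cfLim_eq he, cfLim_eq he', ← hθ, ← hφ]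
  have h0 : (e 0 : ℝ) = d n := by simp [he_def]
  have h0' : (e' 0 : ℝ) = d' n := by simp [he'_def]
  rw [h0, h0']
  have hq : (1 : ℝ) ≤ contQ (pre d n) := by exact_mod_cast contQ_pos (one_le_of_mem_pre hd n)
  set q : ℝ := (contQ (pre d n) : ℝ)
  have ha : (1 : ℝ) ≤ d n := by exact_mod_cast hd n
  have hab : (d n : ℝ) + 1 ≤ d' n := by exact_mod_cast hlt
  have hbD : (d' n : ℝ) + 1 ≤ D := by exact_mod_cast hD
  set a : ℝ := (d n : ℝ)
  set b : ℝ := (d' n : ℝ)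
  have hb0 : 0 < b := by linarith
  have hθ0 := hθm.1
  have hφ0 := hφm.1
  have hθ1 := hθm.2
  have hφ1 := hφm.2
  have hs : 1 / (a + θ) - 1 / (b + φ) = ((b - a) + φ - θ) / ((a + θ) * (b + φ)) := by
    have : a + θ ≠ 0 := by positivity
    have : b + φ ≠ 0 := by positivity
    field_simp; ring
  have hmain : (b - a) / (M + 1) ≤ (b - a) + φ - θ := by
    have hM0 : (0 : ℝ) < M + 1 := by positivity
    have h1 : (b - a) / (M + 1) = (b - a) - (b - a) * (M / (M + 1)) := by field_simp; ring
    have h2 : (1 : ℝ) / (M + 1) = 1 - M / (M + 1) := by field_simp; ring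
    have h3 : (0 : ℝ) ≤ M / (M + 1) := by positivity
    rw [h1]
    nlinarith
  have hpos : 0 ≤ (b - a) + φ - θ := le_trans (by
    have : 0 ≤ b - a := by linarith
    positivity) hmain
  have hden : (a + θ) * (b + φ) ≤ (D : ℝ) ^ 2 := by
    rw [sq]; apply mul_le_mul <;> nlinarith
  have hdpos : 0 < (a + θ) * (b + φ) := by positivity
  rw [hs, abs_of_nonneg (by positivity)]
  calc (b - a) / (4 * (M + 1) * (D : ℝ) ^ 2 * q ^ 2)
      = (b - a) / (M + 1) / (D : ℝ) ^ 2 / (4 * q ^ 2) := by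
        rw [div_div, div_div]; congr 1; ring
    _ ≤ _ := by gcongr

/-! ### The mass distribution principle for digit sequences -/

lemma mass_real {s C q α t m : ℝ} (hs : 0 < s) (hs1 : s ≤ 1) (hC : 0 ≤ C) (hq : 1 ≤ q)
    (hα : 1 ≤ α) (ht : 1 ≤ t) (htα : t ≤ 2 * α) (hm : 1 ≤ m) :
    (t + 1) * (C * q ^ (-2 * s) * α ^ (-s - 1)) ≤
      4 * C * (16 * m) * (t / (4 * m * (2 * α) ^ 2 * q ^ 2)) ^ s := by
  have e1 : (t / (4 * m * (2 * α) ^ 2 * q ^ 2)) ^ s =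
      t ^ s * (16 * m) ^ (-s) * α ^ (-s) * α ^ (-s) * q ^ (-2 * s) := by
    rw [Real.div_rpow (by positivity) (by positivity),
      show 4 * m * (2 * α) ^ 2 * q ^ 2 = (16 * m) * α * α * q ^ (2 : ℝ) by
        rw [Real.rpow_two]; ring,
      Real.mul_rpow (by positivity) (by positivity), Real.mul_rpow (by positivity) (by positivity),
      Real.mul_rpow (by positivity) (by positivity), ← Real.rpow_mul (by positivity),
      show -2 * s = -(2 * s) by ring, Real.rpow_neg (by positivity), Real.rpow_neg (by positivity),
      Real.rpow_neg (by positivity)]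
    field_simp
  have e2 : α ^ (-s - 1) = α ^ (-s) * α⁻¹ := by
    rw [sub_eq_add_neg, Real.rpow_add (by positivity), Real.rpow_neg_one]
  have h1 : (16 * m)⁻¹ ≤ (16 * m) ^ (-s) := by
    rw [← Real.rpow_neg_one]
    exact Real.rpow_le_rpow_of_exponent_le (by linarith) (by linarith)
  have h2 : t * α⁻¹ ≤ 2 * (t ^ s * α ^ (-s)) := by
    have hu : 0 < t / α := by positivity
    have hu2 : t / α ≤ 2 := by rw [div_le_iff₀ (by positivity)]; linarith
    have h3 : t / α = (t / α) ^ s * (t / α) ^ (1 - s) := by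
      rw [← Real.rpow_add hu]; simp
    have h4 : (t / α) ^ (1 - s) ≤ 2 := by
      calc (t / α) ^ (1 - s) ≤ 2 ^ (1 - s) := by gcongr
        _ ≤ 2 ^ (1 : ℝ) := Real.rpow_le_rpow_of_exponent_le (by norm_num) (by linarith)
        _ = 2 := by simp
    have h5 : (t / α) ^ s = t ^ s * α ^ (-s) := by
      rw [Real.div_rpow (by positivity) (by positivity), Real.rpow_neg (by positivity)]; rfl
    rw [← div_eq_mul_inv, h3, h5, mul_comm 2]
    gcongr
  have h6 : 1 ≤ (16 * m) * (16 * m) ^ (-s) := by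
    calc (1 : ℝ) = (16 * m) * (16 * m)⁻¹ := by field_simp
      _ ≤ _ := by gcongr
  rw [e1, e2]
  calc (t + 1) * (C * q ^ (-2 * s) * (α ^ (-s) * α⁻¹))
      ≤ (2 * t) * (C * q ^ (-2 * s) * (α ^ (-s) * α⁻¹)) := by gcongr; linarith
    _ = 2 * C * q ^ (-2 * s) * α ^ (-s) * (t * α⁻¹) := by ring
    _ ≤ 2 * C * q ^ (-2 * s) * α ^ (-s) * (2 * (t ^ s * α ^ (-s))) := by gcongr
    _ = 4 * C * q ^ (-2 * s) * α ^ (-s) * (t ^ s * α ^ (-s)) * 1 := by ring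
    _ ≤ 4 * C * q ^ (-2 * s) * α ^ (-s) * (t ^ s * α ^ (-s)) * ((16 * m) * (16 * m) ^ (-s)) := by
        gcongr
    _ = _ := by ring

section Mass

variable {Ω : Type*} [MeasurableSpace Ω] {ν : Measure Ω} {d : Ω → ℕ → ℕ} {S : Set Ω}
  {s C : ℝ} {M : ℕ}

/-- The Hölder estimate behind the mass distribution principle. If the points of `Q` first differ
at index `n`, then the digits at index `n` lie in some `[a, b]` with `b < 2α`; the measure of `Q`
is at most `b - a + 1` cylinder masses, whereas the diameter is at least of order
`(b - a) / (α q_n) ^ 2`. -/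
lemma measure_le_ediam (hs : 0 < s) (hs1 : s ≤ 1) (hC : 0 ≤ C)
    (hpos : ∀ ω ∈ S, ∀ n, 1 ≤ d ω n)
    (hmass : ∀ ω ∈ S, ∀ ω' ∈ S, ∀ n, (∀ i < n, d ω i = d ω' i) → d ω n ≠ d ω' n →
      d ω (n + 1) ≤ M ∧ ∃ α : ℕ, 1 ≤ α ∧ ∀ ω'' ∈ S, (∀ i < n, d ω'' i = d ω i) →
        d ω'' n + 1 ≤ 2 * α ∧ ν {η | ∀ i < n + 1, d η i = d ω'' i} ≤
          ENNReal.ofReal (C * (contQ (pre (d ω) n) : ℝ) ^ (-2 * s) * (α : ℝ) ^ (-s - 1)))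
    (h0 : ∀ ω ∈ S, ∀ ε : ℝ≥0∞, 0 < ε → ∃ n, ν {η | ∀ i < n, d η i = d ω i} ≤ ε)
    {Q : Set Ω} (hQ : Q ⊆ S) :
    ν Q ≤ ENNReal.ofReal (4 * C * (16 * (M + 1))) *
      Metric.ediam ((fun ω => cfLim (d ω)) '' Q) ^ s := by
  classical
  by_cases hall : ∃ n, ∃ ω ∈ Q, ∃ ω' ∈ Q, d ω n ≠ d ω' n
  swap
  · push Not at hall
    rcases Q.eq_empty_or_nonempty with rfl | ⟨ω, hω⟩
    · simp
    have : ν Q = 0 := by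
      refine le_antisymm (le_of_forall_gt_imp_ge_of_dense fun ε hε => ?_) bot_le
      obtain ⟨n, hn⟩ := h0 ω (hQ hω) ε hε
      have hsub : Q ⊆ {η | ∀ i < n, d η i = d ω i} := fun η hη i _ => hall i η hη ω hω
      exact (measure_mono hsub).trans hn
    rw [this]
    exact bot_le
  obtain ⟨n, ⟨ω₀, hω₀, ω₁, hω₁, hne⟩, hmin⟩ : ∃ n, (∃ ω ∈ Q, ∃ ω' ∈ Q, d ω n ≠ d ω' n) ∧
      ∀ m < n, ¬ ∃ ω ∈ Q, ∃ ω' ∈ Q, d ω m ≠ d ω' m :=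
    ⟨Nat.find hall, Nat.find_spec hall, fun m hm => Nat.find_min hall hm⟩
  have hag : ∀ ω ∈ Q, ∀ ω' ∈ Q, ∀ i < n, d ω i = d ω' i := by
    intro ω hω ω' hω' i hi
    by_contra hcon
    exact hmin i hi ⟨ω, hω, ω', hω', hcon⟩
  obtain ⟨-, α, hα, hmα⟩ := hmass ω₀ (hQ hω₀) ω₁ (hQ hω₁) n (hag _ hω₀ _ hω₁) hne
  set T : Finset ℕ := (Finset.range (2 * α)).filter fun k => ∃ ω ∈ Q, d ω n = k with hT
  have hmemT : ∀ ω ∈ Q, d ω n ∈ T := by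
    intro ω hω
    have := (hmα ω (hQ hω) (hag _ hω _ hω₀)).1
    simp only [hT, Finset.mem_filter, Finset.mem_range]
    exact ⟨by omega, ω, hω, rfl⟩
  have hTne : T.Nonempty := ⟨_, hmemT _ hω₀⟩
  obtain ⟨ωa, hωa, hda⟩ := (Finset.mem_filter.1 (T.min'_mem hTne)).2
  obtain ⟨hbα, ωb, hωb, hdb⟩ := Finset.mem_filter.1 (T.max'_mem hTne)
  rw [Finset.mem_range] at hbα
  have hTsub : T ⊆ Finset.Icc (T.min' hTne) (T.max' hTne) := fun k hk =>
    Finset.mem_Icc.2 ⟨T.min'_le k hk, T.le_max' k hk⟩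
  set a := T.min' hTne
  set b := T.max' hTne
  have hab : a < b := by
    have h1 := Finset.mem_Icc.1 (hTsub (hmemT _ hω₀))
    have h2 := Finset.mem_Icc.1 (hTsub (hmemT _ hω₁))
    rcases lt_or_gt_of_ne hne with h | h <;> omega
  set m : ℝ := C * (contQ (pre (d ω₀) n) : ℝ) ^ (-2 * s) * (α : ℝ) ^ (-s - 1) with hm
  have hm0 : 0 ≤ m := by positivity
  have hν : ν Q ≤ ENNReal.ofReal (((b : ℝ) - a + 1) * m) := by
    have hcov : Q ⊆ ⋃ k ∈ T, {η | η ∈ Q ∧ d η n = k} := by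
      intro η hη
      simp only [Set.mem_iUnion]
      exact ⟨_, hmemT η hη, hη, rfl⟩
    refine (measure_mono hcov).trans ((measure_biUnion_finset_le _ _).trans ?_)
    calc ∑ k ∈ T, ν {η | η ∈ Q ∧ d η n = k} ≤ ∑ k ∈ T, ENNReal.ofReal m := by
          refine Finset.sum_le_sum fun k hk => ?_
          obtain ⟨ω, hω, rfl⟩ := (Finset.mem_filter.1 hk).2
          refine (measure_mono ?_).trans (hmα ω (hQ hω) (hag _ hω _ hω₀)).2
          rintro η ⟨hη, hηn⟩ i hi
          rcases Nat.lt_succ_iff_lt_or_eq.1 hi with h | rfl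
          · exact hag _ hη _ hω i h
          · exact hηn
      _ = ENNReal.ofReal (T.card * m) := by
          rw [Finset.sum_const, nsmul_eq_mul, ENNReal.ofReal_mul (p := (T.card : ℝ)) (by positivity),
            ENNReal.ofReal_natCast]
      _ ≤ ENNReal.ofReal (((b : ℝ) - a + 1) * m) := by
          apply ENNReal.ofReal_le_ofReal
          gcongr
          have := Finset.card_le_card hTsub
          rw [Nat.card_Icc] at this
          have h2 : ((T.card : ℕ) : ℝ) + a ≤ b + 1 := by exact_mod_cast (by omega)
          linarith
  have hbM : d ωb (n + 1) ≤ M := by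
    refine (hmass ωb (hQ hωb) ωa (hQ hωa) n (hag _ hωb _ hωa) ?_).1
    omega
  have hsep := cfLim_sep (hpos _ (hQ hωa)) (hpos _ (hQ hωb)) (hag _ hωa _ hωb)
    (by omega) hbM (D := 2 * α) (by omega)
  rw [hda, hdb, pre_congr (hag _ hωa _ hω₀), ← Real.dist_eq] at hsep
  have hdiam : ENNReal.ofReal (((b : ℝ) - a) / (4 * (M + 1) * ((2 * α : ℕ) : ℝ) ^ 2 *
      (contQ (pre (d ω₀) n) : ℝ) ^ 2)) ≤ Metric.ediam ((fun ω => cfLim (d ω)) '' Q) := by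
    refine le_trans (ENNReal.ofReal_le_ofReal hsep) ?_
    rw [← edist_dist]
    exact Metric.edist_le_ediam_of_mem ⟨ωa, hωa, rfl⟩ ⟨ωb, hωb, rfl⟩
  have hab' : (a : ℝ) + 1 ≤ b := by exact_mod_cast hab
  have hbα' : (b : ℝ) ≤ 2 * α := by exact_mod_cast hbα.le
  have hr := mass_real hs hs1 hC (q := (contQ (pre (d ω₀) n) : ℝ)) (α := α) (t := (b : ℝ) - a)
    (m := M + 1) (by exact_mod_cast contQ_pos (one_le_of_mem_pre (hpos _ (hQ hω₀)) n))
    (by exact_mod_cast hα) (by linarith)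
    (by have : (0 : ℝ) ≤ a := by positivity
        linarith)
    (by have : (0 : ℝ) ≤ M := by positivity
        linarith)
  have hba0 : 0 ≤ (b : ℝ) - a := by linarith
  calc ν Q ≤ _ := hν
    _ ≤ _ := ENNReal.ofReal_le_ofReal hr
    _ = ENNReal.ofReal (4 * C * (16 * (M + 1))) * ENNReal.ofReal (((b : ℝ) - a) /
        (4 * (M + 1) * ((2 * α : ℕ) : ℝ) ^ 2 * (contQ (pre (d ω₀) n) : ℝ) ^ 2)) ^ s := by
        rw [ENNReal.ofReal_mul (by positivity), ENNReal.ofReal_rpow_of_nonneg _ hs.le]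
        · push_cast; rfl
        · positivity
    _ ≤ _ := by gcongr

lemma measurable_convs (hd : ∀ n, Measurable fun ω => d ω n) (n : ℕ) :
    Measurable fun ω => convs (d ω) n := by
  induction n generalizing d with
  | zero => simp only [convs, pre, List.ofFn_zero, mob]; exact measurable_const
  | succ n ih =>
    have h1 : ∀ ω, convs (d ω) (n + 1) = 1 / (d ω 0 + convs (fun i => d ω (1 + i)) n) := by
      intro ω
      rw [add_comm n 1, convs_add]
      simp [pre, mob]
    simp_rw [h1]
    have h2 := ih (d := fun ω i => d ω (1 + i)) (fun n => hd _)
    have h3 : Measurable fun ω => ((d ω 0 : ℕ) : ℝ) := measurable_from_nat.comp (hd 0)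
    exact (h3.add h2).const_div 1

/-- A mass distribution principle for random continued fractions with digits `d ω`, `ω ∈ S`. -/
lemma mass_dim [IsProbabilityMeasure ν] (hs : 0 < s) (hs1 : s ≤ 1) (hC : 0 < C)
    (hd : ∀ n, Measurable fun ω => d ω n) (hS : ∀ᵐ ω ∂ν, ω ∈ S)
    (hpos : ∀ ω ∈ S, ∀ n, 1 ≤ d ω n)
    (hmass : ∀ ω ∈ S, ∀ ω' ∈ S, ∀ n, (∀ i < n, d ω i = d ω' i) → d ω n ≠ d ω' n →
      d ω (n + 1) ≤ M ∧ ∃ α : ℕ, 1 ≤ α ∧ ∀ ω'' ∈ S, (∀ i < n, d ω'' i = d ω i) →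
        d ω'' n + 1 ≤ 2 * α ∧ ν {η | ∀ i < n + 1, d η i = d ω'' i} ≤
          ENNReal.ofReal (C * (contQ (pre (d ω) n) : ℝ) ^ (-2 * s) * (α : ℝ) ^ (-s - 1)))
    (h0 : ∀ ω ∈ S, ∀ ε : ℝ≥0∞, 0 < ε → ∃ n, ν {η | ∀ i < n, d η i = d ω i} ≤ ε) :
    ENNReal.ofReal s ≤ dimH ((fun ω => cfLim (d ω)) '' S) := by
  set G : Ω → ℝ := fun ω => cfLim (d ω) with hG
  have hGm : AEMeasurable G ν := by
    refine aemeasurable_of_tendsto_metrizable_ae atTop (f := fun n ω => convs (d ω) n)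
      (fun n => (measurable_convs hd n).aemeasurable) ?_
    filter_upwards [hS] with ω hω
    exact tendsto_convs (hpos ω hω)
  set K := ENNReal.ofReal (4 * C * (16 * (M + 1))) with hK
  have hK0 : K ≠ 0 := by
    rw [hK, Ne, ENNReal.ofReal_eq_zero, not_le]; positivity
  have hKt : K ≠ ⊤ := ENNReal.ofReal_ne_top
  have hle : K⁻¹ • ν.map G ≤ μH[s] := by
    refine Measure.le_hausdorffMeasure s _ 1 one_pos fun A _ => ?_
    have h1 : ν.map G A ≤ K * Metric.ediam A ^ s := by
      calc ν.map G A ≤ ν.map G (closure A) := measure_mono subset_closure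
        _ = ν (G ⁻¹' closure A) := Measure.map_apply_of_aemeasurable hGm isClosed_closure.measurableSet
        _ = ν (G ⁻¹' closure A ∩ S) := by
            refine (measure_mono_ae ?_).antisymm (measure_mono Set.inter_subset_left)
            filter_upwards [hS] with ω hω h
            exact ⟨h, hω⟩
        _ ≤ K * Metric.ediam (G '' (G ⁻¹' closure A ∩ S)) ^ s :=
            measure_le_ediam hs hs1 hC.le hpos hmass h0 Set.inter_subset_right
        _ ≤ K * Metric.ediam (closure A) ^ s := by
            gcongr
            rintro _ ⟨ω, hω, rfl⟩
            exact hω.1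
        _ = K * Metric.ediam A ^ s := by rw [Metric.ediam_closure]
    rw [Measure.smul_apply, smul_eq_mul]
    calc K⁻¹ * ν.map G A ≤ K⁻¹ * (K * Metric.ediam A ^ s) := by gcongr
      _ = _ := by rw [← mul_assoc, ENNReal.inv_mul_cancel hK0 hKt, one_mul]
  have hS1 : ν S = 1 := by
    rw [measure_eq_measure_of_null_sdiff (Set.subset_univ S), measure_univ]
    rw [← Set.compl_eq_univ_sdiff]
    exact hS
  refine le_dimH_of_hausdorffMeasure_ne_zero (d := s.toNNReal) ?_
  rw [Real.coe_toNNReal s hs.le]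
  intro hzero
  have h2 := hle (G '' S)
  rw [hzero, Measure.smul_apply, smul_eq_mul] at h2
  have h3 := Measure.le_map_apply_image hGm S
  rw [hS1] at h3
  have h4 : K⁻¹ * 1 ≤ 0 := le_trans (by gcongr) h2
  rw [mul_one, nonpos_iff_eq_zero, ENNReal.inv_eq_zero] at h4
  exact hKt h4

end Mass

/-! ### Product measures on sequences of blocks -/

/-- The digit sequence obtained by concatenating the blocks `ω 0, ω 1, …`, each truncated to its
first `L` entries. -/
def dig (L : ℕ) (ω : ℕ → ℕ → ℕ) (n : ℕ) : ℕ := ω (n / L) (n % L)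

lemma dig_mul_add {L : ℕ} (ω : ℕ → ℕ → ℕ) (j : ℕ) {k : ℕ} (hk : k < L) :
    dig L ω (j * L + k) = ω j k := by
  have hL : 0 < L := by omega
  rw [dig, add_comm, Nat.add_mul_div_right _ _ hL, Nat.div_eq_of_lt hk, Nat.add_mul_mod_self_right,
    Nat.mod_eq_of_lt hk, zero_add]

lemma measurable_dig (L n : ℕ) : Measurable fun ω : ℕ → ℕ → ℕ => dig L ω n :=
  (measurable_pi_apply (n % L)).comp (measurable_pi_apply (n / L))

/-- The finitely supported law on blocks giving mass `p x` to each `x ∈ F`. -/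
noncomputable def blockLaw (F : Finset (ℕ → ℕ)) (p : (ℕ → ℕ) → ℝ) : Measure (ℕ → ℕ) :=
  ∑ x ∈ F, ENNReal.ofReal (p x) • Measure.dirac x

lemma blockLaw_apply (F : Finset (ℕ → ℕ)) (p : (ℕ → ℕ) → ℝ) (A : Set (ℕ → ℕ))
    (hA : MeasurableSet A) :
    blockLaw F p A = ∑ x ∈ F, ENNReal.ofReal (p x) * A.indicator 1 x := by
  simp [blockLaw, Measure.finsetSum_apply, Measure.dirac_apply' _ hA]

lemma isProbabilityMeasure_blockLaw {F : Finset (ℕ → ℕ)} {p : (ℕ → ℕ) → ℝ} (h0 : ∀ x, 0 ≤ p x)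
    (h1 : ∑ x ∈ F, p x = 1) : IsProbabilityMeasure (blockLaw F p) := by
  constructor
  rw [blockLaw_apply _ _ _ MeasurableSet.univ]
  simp only [Set.indicator_univ, Pi.one_apply, mul_one]
  rw [← ENNReal.ofReal_sum_of_nonneg (fun x _ => h0 x), h1, ENNReal.ofReal_one]

lemma blockLaw_le {F : Finset (ℕ → ℕ)} {p : (ℕ → ℕ) → ℝ} {A : Set (ℕ → ℕ)}
    (hA : MeasurableSet A) {x : ℕ → ℕ} (hx : ∀ y ∈ F, y ∈ A → y = x) :
    blockLaw F p A ≤ ENNReal.ofReal (p x) := by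
  classical
  rw [blockLaw_apply _ _ _ hA]
  have h1 : ∀ y ∈ F, ENNReal.ofReal (p y) * A.indicator 1 y ≤
      if y = x then ENNReal.ofReal (p x) else 0 := by
    intro y hy
    by_cases hyA : y ∈ A
    · rw [hx y hy hyA]
      simp only [if_true]
      exact mul_le_of_le_one_right' (Set.indicator_le_self' (by simp) _)
    · simp [hyA]
  refine (Finset.sum_le_sum h1).trans ?_
  rw [Finset.sum_ite_eq']
  split_ifs <;> simp

lemma measurableSet_agree (x : ℕ → ℕ) (k : ℕ) : MeasurableSet {y : ℕ → ℕ | ∀ i < k, y i = x i} := by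
  have : {y : ℕ → ℕ | ∀ i < k, y i = x i} = ⋂ i, ⋂ (_ : i < k), {y | y i = x i} := by
    ext; simp
  rw [this]
  exact MeasurableSet.iInter fun i => MeasurableSet.iInter fun _ =>
    measurableSet_eq_fun (measurable_pi_apply i) measurable_const

lemma contQ_pre_add_le {d : ℕ → ℕ} (hd : ∀ i, 1 ≤ d i) {n M : ℕ} (k : ℕ)
    (h : ∀ i < k, d (n + i) ≤ M) : contQ (pre d (n + k)) ≤ (M + 1) ^ k * contQ (pre d n) := by
  induction k with
  | zero => simp
  | succ k ih =>
    have h1 := ih fun i hi => h i (by omega)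
    have h2 := contQ_concat_le (one_le_of_mem_pre hd (n + k)) (d (n + k))
    rw [← add_assoc, pre_succ]
    have h3 := h k (by omega)
    calc _ ≤ _ := h2
      _ ≤ (M + 1) * ((M + 1) ^ k * contQ (pre d n)) := by gcongr
      _ = _ := by ring

section Blocks

variable {L : ℕ} {F : ℕ → Finset (ℕ → ℕ)} {p : ℕ → (ℕ → ℕ) → ℝ}

/-- The mass of a cylinder cut inside block `j` is at most the product of the masses of the
complete blocks times the mass of the constraint `A` satisfied by the incomplete one. -/
lemma infinitePi_cyl_le [∀ j, IsProbabilityMeasure (blockLaw (F j) (p j))]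
    (hp0 : ∀ j x, 0 ≤ p j x)
    (hdet : ∀ j, ∀ x ∈ F j, ∀ y ∈ F j, (∀ i < L, x i = y i) → x = y)
    {ω : ℕ → ℕ → ℕ} (hω : ∀ j, ω j ∈ F j) (j n : ℕ) (hn : j * L ≤ n) {A : Set (ℕ → ℕ)}
    (hA : MeasurableSet A)
    (hsub : ∀ η : ℕ → ℕ → ℕ, (∀ i < n, dig L η i = dig L ω i) → η j ∈ A) :
    Measure.infinitePi (fun j => blockLaw (F j) (p j)) {η | ∀ i < n, dig L η i = dig L ω i} ≤
      ENNReal.ofReal (∏ i ∈ Finset.range j, p i (ω i)) * blockLaw (F j) (p j) A := by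
  classical
  set t : ℕ → Set (ℕ → ℕ) := fun i => if i < j then {y | ∀ k < L, y k = ω i k} else A with ht
  have hsub' : {η : ℕ → ℕ → ℕ | ∀ i < n, dig L η i = dig L ω i} ⊆
      Set.pi (Finset.range (j + 1) : Finset ℕ) t := by
    intro η hη i hi
    simp only [Finset.coe_range, Set.mem_Iio] at hi
    simp only [ht]
    split_ifs with hij
    · intro k hk
      have h1 : i * L + k < n := by
        have : (i + 1) * L ≤ j * L := Nat.mul_le_mul_right _ hij
        rw [add_mul] at this
        omega
      have := hη _ h1
      rwa [dig_mul_add η i hk, dig_mul_add ω i hk] at this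
    · obtain rfl : i = j := by omega
      exact hsub η hη
  refine (measure_mono hsub').trans ?_
  rw [Measure.infinitePi_pi]
  · rw [Finset.prod_range_succ, ENNReal.ofReal_prod_of_nonneg (fun i _ => hp0 _ _)]
    have htj : t j = A := by simp [ht]
    rw [htj]
    gcongr with i hi
    rw [Finset.mem_range] at hi
    simp only [ht, if_pos hi]
    exact blockLaw_le (measurableSet_agree _ _) fun y hy hyA => hdet i y hy _ (hω i) hyA
  · intro i _
    simp only [ht]
    split_ifs
    · exact measurableSet_agree _ _
    · exact hA

/-- The dimension of the set of continued fractions formed by concatenating blocks, given mass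
estimates. Blocks in `J` consist of `1`s and one free digit below `2 α j`, at position `r j`, each
value having mass `1 / α j`; the digits of the other blocks are bounded by `M` and end with `1`. -/
lemma dim_of_blocks {M : ℕ} {J : Set ℕ} {r α : ℕ → ℕ} {s : ℝ} (hs : 0 < s) (hs1 : s ≤ 1)
    (hL : 0 < L) (hM : 1 ≤ M) (hp0 : ∀ j x, 0 ≤ p j x) (hp1 : ∀ j, ∑ x ∈ F j, p j x = 1)
    (hF1 : ∀ j, ∀ x ∈ F j, ∀ i, 1 ≤ x i)
    (hdet : ∀ j, ∀ x ∈ F j, ∀ y ∈ F j, (∀ i < L, x i = y i) → x = y)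
    (hns : ∀ j ∉ J, ∀ x ∈ F j, ∀ i, x i ≤ M) (hns1 : ∀ j ∉ J, ∀ x ∈ F j, x (L - 1) = 1)
    (hα : ∀ j, 1 ≤ α j)
    (hsp : ∀ j ∈ J, ∀ x ∈ F j, ∀ i, i ≠ r j → x i = 1)
    (hspr : ∀ j ∈ J, ∀ x ∈ F j, x (r j) < 2 * α j)
    (hspp : ∀ j ∈ J, ∀ x ∈ F j, p j x = (α j : ℝ)⁻¹)
    (hadj : ∀ j ∈ J, j + 1 ∉ J)
    (hc : ∀ ω : ℕ → ℕ → ℕ, (∀ j, ω j ∈ F j) → ∀ j, ∏ i ∈ Finset.range j, p i (ω i) ≤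
      (contQ (pre (dig L ω) (j * L)) : ℝ) ^ (-2 * s))
    (hcs : ∀ ω : ℕ → ℕ → ℕ, (∀ j, ω j ∈ F j) → ∀ j ∈ J, ∏ i ∈ Finset.range j, p i (ω i) ≤
      (2 ^ L * (contQ (pre (dig L ω) (j * L)) : ℝ)) ^ (-2 * s) * (α j : ℝ) ^ (-s)) :
    ENNReal.ofReal s ≤ dimH ((fun ω => cfLim (dig L ω)) '' {ω | ∀ j, ω j ∈ F j}) := by
  have hprob : ∀ j, IsProbabilityMeasure (blockLaw (F j) (p j)) := fun j =>
    isProbabilityMeasure_blockLaw (hp0 j) (hp1 j)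
  have hdpos : ∀ ω ∈ {ω : ℕ → ℕ → ℕ | ∀ j, ω j ∈ F j}, ∀ n, 1 ≤ dig L ω n :=
    fun ω hω n => hF1 _ _ (hω _) _
  -- The mass of a cylinder containing the first `j` blocks entirely.
  have hfull : ∀ ω : ℕ → ℕ → ℕ, (∀ j, ω j ∈ F j) → ∀ j n, j * L ≤ n →
      Measure.infinitePi (fun j => blockLaw (F j) (p j)) {η | ∀ i < n, dig L η i = dig L ω i} ≤
        ENNReal.ofReal ((contQ (pre (dig L ω) (j * L)) : ℝ) ^ (-2 * s)) := by
    intro ω hω j n hn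
    refine (infinitePi_cyl_le hp0 hdet hω j n hn MeasurableSet.univ
      (fun _ _ => Set.mem_univ _)).trans ?_
    rw [measure_univ, mul_one]
    exact ENNReal.ofReal_le_ofReal (hc ω hω j)
  refine mass_dim (ν := Measure.infinitePi fun j => blockLaw (F j) (p j))
    (C := ((M : ℝ) + 1) ^ (2 * L) * (M : ℝ) ^ 2) (M := M) hs hs1 (by positivity)
    (measurable_dig L) ?_ hdpos ?_ ?_
  · change ∀ᵐ ω ∂Measure.infinitePi fun j => blockLaw (F j) (p j), ∀ j, ω j ∈ F j
    rw [ae_all_iff]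
    intro j
    have hFm : MeasurableSet ((F j : Set (ℕ → ℕ))ᶜ) := (F j).finite_toSet.measurableSet.compl
    have h1 := Measure.infinitePi_pi (fun j => blockLaw (F j) (p j)) (s := {j})
      (t := fun i => (F i : Set (ℕ → ℕ))ᶜ) (by simpa using hFm)
    rw [Finset.prod_singleton, blockLaw_apply _ _ _ hFm] at h1
    rw [ae_iff]
    convert h1 using 1
    · congr 1
      ext ω
      simp
    · symm
      refine Finset.sum_eq_zero fun x hx => ?_
      simp [hx]
  · intro ω hω ω' hω' n hag hne
    obtain ⟨j, k, hk, rfl⟩ : ∃ j k, k < L ∧ n = j * L + k :=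
      ⟨n / L, n % L, Nat.mod_lt _ hL, (Nat.div_add_mod' n L).symm⟩
    rw [dig_mul_add _ _ hk, dig_mul_add _ _ hk] at hne
    have hMR : (1 : ℝ) ≤ M := by exact_mod_cast hM
    by_cases hj : j ∈ J
    · -- the digits differ at the free position of a special block
      obtain rfl : k = r j := by
        by_contra hkr
        exact hne (by rw [hsp j hj _ (hω j) k hkr, hsp j hj _ (hω' j) k hkr])
      refine ⟨?_, α j, hα j, ?_⟩
      · by_cases hk1 : r j + 1 < L
        · rw [add_assoc, dig_mul_add _ _ hk1, hsp j hj _ (hω j) _ (by omega)]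
          exact hM
        · have : j * L + r j + 1 = (j + 1) * L + 0 := by rw [add_mul]; omega
          rw [this, dig_mul_add _ _ hL]
          exact hns _ (hadj j hj) _ (hω _) _
      · intro ω'' hω'' hag''
        rw [dig_mul_add _ _ hk]
        refine ⟨hspr j hj _ (hω'' j), ?_⟩
        refine (infinitePi_cyl_le hp0 hdet hω'' j _ (by omega)
          (A := {y | y (r j) = ω'' j (r j)})
          (measurableSet_eq_fun (measurable_pi_apply _) measurable_const) ?_).trans ?_
        · intro η hη
          have := hη (j * L + r j) (by omega)
          rwa [dig_mul_add _ _ hk, dig_mul_add _ _ hk] at this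
        have hle : blockLaw (F j) (p j) {y | y (r j) = ω'' j (r j)} ≤
            ENNReal.ofReal (p j (ω'' j)) := by
          refine blockLaw_le (measurableSet_eq_fun (measurable_pi_apply _) measurable_const) ?_
          intro y hy hyA
          funext i
          by_cases hi : i = r j
          · rw [hi]; exact hyA
          · rw [hsp j hj _ hy i hi, hsp j hj _ (hω'' j) i hi]
        have hq1 : ∀ n, (1 : ℝ) ≤ contQ (pre (dig L ω'') n) := fun n => by
          exact_mod_cast contQ_pos (one_le_of_mem_pre (hdpos _ hω'') n)
        have hα0 : (0 : ℝ) < α j := by exact_mod_cast hα j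
        refine (mul_le_mul' (ENNReal.ofReal_le_ofReal (hcs ω'' hω'' j hj)) hle).trans ?_
        rw [← ENNReal.ofReal_mul (by have := hq1 (j * L); positivity)]
        apply ENNReal.ofReal_le_ofReal
        rw [hspp j hj _ (hω'' j), ← pre_congr hag'']
        have hq : (contQ (pre (dig L ω'') (j * L + r j)) : ℝ) ≤
            2 ^ L * (contQ (pre (dig L ω'') (j * L)) : ℝ) := by
          have h1 := contQ_pre_add_le (hdpos _ hω'') (n := j * L) (M := 1) (r j) (by
            intro i hi
            rw [dig_mul_add _ _ (by omega), hsp j hj _ (hω'' j) _ (by omega)])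
          have h2 : (2 : ℕ) ^ r j ≤ 2 ^ L := Nat.pow_le_pow_right (by norm_num) hk.le
          have h3 : contQ (pre (dig L ω'') (j * L + r j)) ≤
              2 ^ L * contQ (pre (dig L ω'') (j * L)) := h1.trans (Nat.mul_le_mul_right _ h2)
          exact_mod_cast h3
        have h4 : (2 ^ L * (contQ (pre (dig L ω'') (j * L)) : ℝ)) ^ (-2 * s) ≤
            (contQ (pre (dig L ω'') (j * L + r j)) : ℝ) ^ (-2 * s) :=
          Real.rpow_le_rpow_of_nonpos (by have := hq1 (j * L + r j); positivity) hq (by linarith)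
        have h5 : (1 : ℝ) ≤ ((M : ℝ) + 1) ^ (2 * L) * (M : ℝ) ^ 2 :=
          one_le_mul_of_one_le_of_one_le (one_le_pow₀ (by linarith)) (one_le_pow₀ hMR)
        have h6 : (α j : ℝ) ^ (-s - 1) = (α j : ℝ) ^ (-s) * (α j : ℝ)⁻¹ := by
          rw [sub_eq_add_neg, Real.rpow_add hα0, Real.rpow_neg_one]
        rw [h6]
        calc _ ≤ 1 * (contQ (pre (dig L ω'') (j * L + r j)) : ℝ) ^ (-2 * s) * (α j : ℝ) ^ (-s)
              * (α j : ℝ)⁻¹ := by rw [one_mul]; gcongr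
          _ ≤ (((M : ℝ) + 1) ^ (2 * L) * (M : ℝ) ^ 2) *
              (contQ (pre (dig L ω'') (j * L + r j)) : ℝ) ^ (-2 * s) * (α j : ℝ) ^ (-s)
              * (α j : ℝ)⁻¹ := by gcongr
          _ = _ := by ring
    · have hkL : k + 1 < L := by
        by_contra hcon
        obtain rfl : k = L - 1 := by omega
        exact hne (by rw [hns1 j hj _ (hω j), hns1 j hj _ (hω' j)])
      refine ⟨?_, M, hM, ?_⟩
      · rw [add_assoc, dig_mul_add _ _ hkL]
        exact hns j hj _ (hω j) _
      · intro ω'' hω'' hag''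
        rw [dig_mul_add _ _ hk]
        refine ⟨by have := hns j hj _ (hω'' j) k; omega, ?_⟩
        refine (hfull ω'' hω'' j _ (by omega)).trans (ENNReal.ofReal_le_ofReal ?_)
        rw [← pre_congr hag'']
        have hq1 : ∀ n, (1 : ℝ) ≤ contQ (pre (dig L ω'') n) := fun n => by
          exact_mod_cast contQ_pos (one_le_of_mem_pre (hdpos _ hω'') n)
        have hq : (contQ (pre (dig L ω'') (j * L + k)) : ℝ) ≤
            ((M : ℝ) + 1) ^ L * (contQ (pre (dig L ω'') (j * L)) : ℝ) := by
          have h1 := contQ_pre_add_le (hdpos _ hω'') (n := j * L) (M := M) k (by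
            intro i hi
            rw [dig_mul_add _ _ (by omega)]
            exact hns j hj _ (hω'' j) _)
          have h2 : (M + 1) ^ k ≤ (M + 1) ^ L := Nat.pow_le_pow_right (by omega) hk.le
          have h3 : contQ (pre (dig L ω'') (j * L + k)) ≤
              (M + 1) ^ L * contQ (pre (dig L ω'') (j * L)) := h1.trans (Nat.mul_le_mul_right _ h2)
          exact_mod_cast h3
        set Q := (contQ (pre (dig L ω'') (j * L + k)) : ℝ)
        set R := (contQ (pre (dig L ω'') (j * L)) : ℝ)
        have hQ0 : 1 ≤ Q := hq1 _
        have hR0 : 1 ≤ R := hq1 _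
        set A : ℝ := ((M : ℝ) + 1) ^ L with hA
        have hA1 : 1 ≤ A := one_le_pow₀ (by linarith)
        have h4 : (A * R) ^ (-2 * s) ≤ Q ^ (-2 * s) :=
          Real.rpow_le_rpow_of_nonpos (by positivity) hq (by linarith)
        rw [Real.mul_rpow (by positivity) (by positivity)] at h4
        have h5 : (A ^ 2)⁻¹ ≤ A ^ (-2 * s) := by
          rw [← Real.rpow_two, ← Real.rpow_neg (by positivity)]
          exact Real.rpow_le_rpow_of_exponent_le hA1 (by linarith)
        have h6 : ((M : ℝ) ^ 2)⁻¹ ≤ (M : ℝ) ^ (-s - 1) := by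
          rw [← Real.rpow_two, ← Real.rpow_neg (by positivity)]
          exact Real.rpow_le_rpow_of_exponent_le hMR (by linarith)
        have hAA : ((M : ℝ) + 1) ^ (2 * L) = A ^ 2 := by rw [hA, ← pow_mul, mul_comm]
        rw [hAA]
        have hM0 : (0 : ℝ) < M := by linarith
        calc R ^ (-2 * s) = A ^ 2 * ((A ^ 2)⁻¹ * R ^ (-2 * s)) := by field_simp
          _ ≤ A ^ 2 * (A ^ (-2 * s) * R ^ (-2 * s)) := by gcongr
          _ ≤ A ^ 2 * Q ^ (-2 * s) := by gcongr
          _ = A ^ 2 * (M : ℝ) ^ 2 * Q ^ (-2 * s) * ((M : ℝ) ^ 2)⁻¹ := by field_simp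
          _ ≤ _ := by gcongr
  · intro ω hω ε hε
    have h1 : Tendsto (fun j : ℕ => ENNReal.ofReal ((j : ℝ) ^ (-(2 * s)))) atTop (𝓝 0) := by
      rw [← ENNReal.ofReal_zero]
      exact (ENNReal.continuous_ofReal.tendsto 0).comp
        ((tendsto_rpow_neg_atTop (by positivity)).comp tendsto_natCast_atTop_atTop)
    obtain ⟨j, hj, hj0⟩ := ((h1.eventually (ge_mem_nhds hε)).and (eventually_gt_atTop 0)).exists
    refine ⟨j * L, (hfull ω hω j _ le_rfl).trans (le_trans (ENNReal.ofReal_le_ofReal ?_) hj)⟩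
    rw [neg_mul]
    refine Real.rpow_le_rpow_of_nonpos (by exact_mod_cast hj0) ?_ (by linarith)
    have h2 := contQ_pre_ge (hdpos ω hω) (j * L)
    have h3 : j ≤ j * L := Nat.le_mul_of_pos_right _ hL
    exact_mod_cast h3.trans h2

end Blocks

/-! ### Growth of the normalised masses and choice of the special blocks -/

/-- `X i` stands for the mass of a cylinder of `i` blocks times `q ^ (2 s)`. Ordinary blocks
(outside `J`) contract it by `2 H`, which beats the growth `H ^ i` of the factors `a i` lost at
special blocks as soon as these are sufficiently sparse: `e` is the index following the last
special block before `i`, and `i ≥ g e`. -/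
lemma growth {X a : ℕ → ℝ} {J : Set ℕ} {H CL : ℝ} {g : ℕ → ℕ} (hX0 : X 0 ≤ 1) (hH : 1 ≤ H)
    (hCL : 0 ≤ CL) (hX : ∀ i, 0 ≤ X i) (hns : ∀ i ∉ J, X (i + 1) ≤ X i / (2 * H))
    (hsp : ∀ i ∈ J, X (i + 1) ≤ X i * CL * a i) (ha : ∀ i ∈ J, a i ≤ 2 * H ^ (i + 1))
    (hg : ∀ e, 2 * CL * H * (2 * H) ^ e ≤ 2 ^ g e)
    (hJ : ∀ i ∈ J, ∀ e ≤ i, (e = 0 ∨ ∃ k ∈ J, e = k + 1) → g e ≤ i) :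
    (∀ i, X i ≤ 1) ∧ ∀ i ∈ J, X i * CL * a i ≤ 1 := by
  have hstep : ∀ i ∈ J, ∀ e ≤ i, (e = 0 ∨ ∃ k ∈ J, e = k + 1) →
      X i * (2 * H) ^ (i - e) ≤ 1 → X i * CL * a i ≤ 1 := by
    intro i hi e hei he hXe
    have h1 : (2 : ℝ) ^ g e ≤ 2 ^ i := pow_le_pow_right₀ (by norm_num) (hJ i hi e hei he)
    have h2 : (2 * H) ^ i = (2 * H) ^ e * (2 * H) ^ (i - e) := by
      rw [← pow_add]; congr 1; omega
    have hp : (0 : ℝ) < 2 ^ i := by positivity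
    have h3 : X i * CL * a i * 2 ^ i ≤ 1 * 2 ^ i := by
      calc X i * CL * a i * 2 ^ i ≤ X i * CL * (2 * H ^ (i + 1)) * 2 ^ i := by
            have := hX i
            gcongr
            exact ha i hi
        _ = X i * (2 * CL * H) * (2 * H) ^ i := by rw [mul_pow]; ring
        _ = (X i * (2 * H) ^ (i - e)) * (2 * CL * H * (2 * H) ^ e) := by rw [h2]; ring
        _ ≤ 1 * (2 * CL * H * (2 * H) ^ e) := by gcongr
        _ ≤ 1 * 2 ^ i := by linarith [hg e]
    exact le_of_mul_le_mul_right h3 hp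
  have hmain : ∀ i, ∃ e ≤ i, (e = 0 ∨ ∃ k ∈ J, e = k + 1) ∧ X i * (2 * H) ^ (i - e) ≤ 1 := by
    intro i
    induction i with
    | zero => exact ⟨0, le_rfl, Or.inl rfl, by simpa using hX0⟩
    | succ i ih =>
      obtain ⟨e, hei, he, hXe⟩ := ih
      by_cases hi : i ∈ J
      · exact ⟨i + 1, le_rfl, Or.inr ⟨i, hi, rfl⟩, by
          simpa using (hsp i hi).trans (hstep i hi e hei he hXe)⟩
      · refine ⟨e, by omega, he, ?_⟩
        rw [show i + 1 - e = (i - e) + 1 by omega, pow_succ]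
        calc X (i + 1) * ((2 * H) ^ (i - e) * (2 * H))
            ≤ X i / (2 * H) * ((2 * H) ^ (i - e) * (2 * H)) := by gcongr; exact hns i hi
          _ = X i * (2 * H) ^ (i - e) := by field_simp
          _ ≤ 1 := hXe
  refine ⟨fun i => ?_, fun i hi => ?_⟩
  · obtain ⟨e, -, -, hXe⟩ := hmain i
    refine le_trans ?_ hXe
    exact le_mul_of_one_le_right (hX i) (one_le_pow₀ (by linarith))
  · obtain ⟨e, hei, he, hXe⟩ := hmain i
    exact hstep i hi e hei he hXe

/-- A cofinal set of indices contains an infinite subset that is as sparse as desired. -/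
lemma exists_sparse {P : ℕ → Prop} (hP : ∀ K, ∃ j ≥ K, P j) (g : ℕ → ℕ) :
    ∃ J : Set ℕ, (∀ j ∈ J, P j) ∧ (∀ K, ∃ j ∈ J, K ≤ j) ∧ (∀ j ∈ J, j + 1 ∉ J) ∧
      ∀ i ∈ J, ∀ e ≤ i, (e = 0 ∨ ∃ k ∈ J, e = k + 1) → g e ≤ i := by
  choose f hf hfP using hP
  set nx : ℕ → ℕ := fun K => f (∑ e ∈ Finset.range (K + 2), g e + K + 2) with hnx
  have hnx1 : ∀ K, ∑ e ∈ Finset.range (K + 2), g e + K + 2 ≤ nx K := fun K => hf _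
  have hnxg : ∀ K, ∀ e < K + 2, g e ≤ nx K := by
    intro K e he
    have := Finset.single_le_sum (f := g) (fun _ _ => Nat.zero_le _) (Finset.mem_range.2 he)
    have := hnx1 K
    omega
  set u : ℕ → ℕ := fun k => nx^[k + 1] 0 with hu
  have husucc : ∀ k, u (k + 1) = nx (u k) := fun k => by
    simp only [hu]; rw [Function.iterate_succ_apply']
  have hu2 : ∀ k, u k + 2 ≤ u (k + 1) := fun k => by
    rw [husucc]; have := hnx1 (u k); omega
  have humono : StrictMono u := strictMono_nat_of_lt_succ fun k => by have := hu2 k; omega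
  refine ⟨Set.range u, ?_, ?_, ?_, ?_⟩
  · rintro _ ⟨k, rfl⟩
    simp only [hu]
    rw [Function.iterate_succ_apply']
    exact hfP _
  · exact fun K => ⟨u K, ⟨K, rfl⟩, humono.id_le K⟩
  · rintro _ ⟨k, rfl⟩ ⟨l, hl⟩
    have h1 : k < l := humono.lt_iff_lt.1 (by omega)
    have h2 : u (k + 1) ≤ u l := humono.monotone h1
    have := hu2 k
    omega
  · rintro _ ⟨k, rfl⟩ e hek (rfl | ⟨_, ⟨l, rfl⟩, rfl⟩)
    · rcases k with _ | k
      · exact hnxg 0 0 (by omega)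
      · rw [husucc]; exact hnxg _ 0 (by omega)
    · have h1 : l < k := humono.lt_iff_lt.1 (by omega)
      obtain ⟨k, rfl⟩ : ∃ k', k = k' + 1 := ⟨k - 1, by omega⟩
      rw [husucc]
      have h2 : u l ≤ u k := humono.monotone (by omega)
      exact hnxg _ _ (by omega)

lemma contQ_pre_le_prod {x : ℕ → ℕ} (hx : ∀ i, 1 ≤ x i) (n : ℕ) :
    contQ (pre x n) ≤ ∏ i ∈ Finset.range n, (x i + 1) := by
  induction n with
  | zero => simp [pre]
  | succ n ih =>
    rw [pre_succ, Finset.prod_range_succ, mul_comm]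
    exact (contQ_concat_le (one_le_of_mem_pre hx n) _).trans (Nat.mul_le_mul_left _ ih)

lemma contQ_pre_special_le {x : ℕ → ℕ} (hx : ∀ i, 1 ≤ x i) {r α : ℕ} (hα : 1 ≤ α)
    (h1 : ∀ i, i ≠ r → x i = 1) (hr : x r < 2 * α) (n : ℕ) :
    contQ (pre x n) ≤ 2 ^ n * α := by
  refine (contQ_pre_le_prod hx n).trans ?_
  calc ∏ i ∈ Finset.range n, (x i + 1) ≤ ∏ i ∈ Finset.range n, (2 * if i = r then α else 1) := by
        refine Finset.prod_le_prod' fun i _ => ?_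
        split_ifs with h
        · rw [h]; omega
        · rw [h1 i h]
    _ ≤ _ := by
        rw [Finset.prod_mul_distrib, Finset.prod_const, Finset.card_range]
        gcongr
        rw [Finset.prod_ite_eq']
        split_ifs <;> omega

lemma contQ_block_succ_le {L : ℕ} {ω : ℕ → ℕ → ℕ} (hω : ∀ j i, 1 ≤ ω j i) (i : ℕ) :
    contQ (pre (dig L ω) ((i + 1) * L)) ≤
      2 * contQ (pre (dig L ω) (i * L)) * contQ (pre (ω i) L) := by
  have h1 : pre (fun k => dig L ω (i * L + k)) L = pre (ω i) L :=
    pre_congr fun k hk => dig_mul_add ω i hk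
  rw [add_mul, one_mul, pre_add, h1]
  exact contQ_append_le (one_le_of_mem_pre (fun n => hω _ _) _) (one_le_of_mem_pre (hω i) _)

/-! ### The Cantor set of the lower bound -/

/-- An ordinary block: a word followed by `1`s. -/
def ordBlock {N : ℕ} (w : Fin N → ℕ+) (i : ℕ) : ℕ := if h : i < N then (w ⟨i, h⟩ : ℕ) else 1

/-- A special block: the digit `a` at position `r`, surrounded by `1`s. -/
def spBlock (r a i : ℕ) : ℕ := if i = r then a else 1

lemma pre_ordBlock {N : ℕ} (w : Fin N → ℕ+) :
    pre (ordBlock w) N = List.ofFn fun i => (w i : ℕ) := by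
  unfold pre
  congr 1
  funext i
  simp [ordBlock]

lemma ordBlock_injective {N : ℕ} : Function.Injective (ordBlock (N := N)) := by
  intro w w' h
  funext i
  have := congrFun h i
  simpa [ordBlock] using this

lemma spBlock_injective (r : ℕ) : Function.Injective (spBlock r) := by
  intro a a' h
  simpa [spBlock] using congrFun h r

lemma mass_step {c p q q' R s : ℝ} (hs : 0 ≤ s) (hc : 0 ≤ c) (hp : 0 ≤ p) (hq : 0 ≤ q)
    (hq' : 0 ≤ q') (hR : 0 ≤ R) (h : q' ≤ R * q) :
    c * p * q' ^ (2 * s) ≤ c * q ^ (2 * s) * (p * R ^ (2 * s)) := by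
  calc c * p * q' ^ (2 * s) ≤ c * p * (R * q) ^ (2 * s) := by gcongr
    _ = _ := by rw [Real.mul_rpow hR hq]; ring

/-- Failure of the pressure condition at `s` provides finitely many words of a common length `N`
with a large weighted sum. -/
lemma exists_words {B s : ℝ} (hB : 0 < B) (hs : 0 ≤ s)
    (h : ¬ ∃ P : EReal, P ≤ 0 ∧
      Tendsto (fun n : ℕ => (((n : ℝ)⁻¹ : ℝ) : EReal) * ENNReal.log (presSum B s s n))
        atTop (nhds P)) (K : ℝ) :
    ∃ (N : ℕ) (W : Finset (Fin N → ℕ+)), K * B ^ ((N : ℝ) * s) <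
      ∑ w ∈ W, (contQ (List.ofFn fun i => (w i : ℕ)) : ℝ) ^ (-2 * s) := by
  have h1 : ¬ ∀ n, presSum B s s n ≤ ENNReal.ofReal K := fun hb =>
    h (pressure_of_bounded hB hs ENNReal.ofReal_ne_top hb)
  push Not at h1
  obtain ⟨N, hN⟩ := h1
  rw [presSum, ENNReal.tsum_eq_iSup_sum, lt_iSup_iff] at hN
  obtain ⟨W, hW⟩ := hN
  refine ⟨N, W, ?_⟩
  rw [← ENNReal.ofReal_sum_of_nonneg (fun w _ => by positivity), ← Finset.mul_sum] at hW
  have h2 := (ENNReal.ofReal_lt_ofReal_iff'.1 hW).1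
  rwa [neg_mul, Real.rpow_neg hB.le, inv_mul_eq_div, lt_div_iff₀ (by positivity)] at h2

/-- The lower bound: if the pressure condition fails at `s`, and `Φ n ≤ b ^ n` infinitely often
for every `b > B`, then `E1 Φ` has dimension at least `s`. -/
lemma le_dimH_E1 {Φ : ℕ → ℝ} {B s : ℝ} (hB : 1 < B) (hs : 0 < s) (hs1 : s ≤ 1)
    (h : ¬ ∃ P : EReal, P ≤ 0 ∧
      Tendsto (fun n : ℕ => (((n : ℝ)⁻¹ : ℝ) : EReal) * ENNReal.log (presSum B s s n))
        atTop (nhds P))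
    (hΦ : ∀ b, B < b → ∃ᶠ n in atTop, Φ n ≤ b ^ n) :
    ENNReal.ofReal s ≤ dimH (E1 Φ) := by
  classical
  have hB0 : 0 < B := by linarith
  obtain ⟨N, W, hW⟩ := exists_words hB0 hs.le h (64 * B ^ s)
  set Z : ℝ := ∑ w ∈ W, (contQ (List.ofFn fun i => (w i : ℕ)) : ℝ) ^ (-2 * s) with hZ
  obtain ⟨L, hL⟩ : ∃ L, L = N + 1 := ⟨_, rfl⟩
  have hL0 : 0 < L := by omega
  have hLR : (L : ℝ) = N + 1 := by rw [hL]; push_cast; ring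
  -- `b` is slightly larger than `B`, so that `H = b ^ (L s)` is `2 B ^ (L s)`.
  set b : ℝ := B * 2 ^ (1 / ((L : ℝ) * s)) with hb
  have hLs : 0 < (L : ℝ) * s := by positivity
  have hBb : B < b := by
    rw [hb]
    exact lt_mul_of_one_lt_right hB0 (Real.one_lt_rpow (by norm_num) (by positivity))
  have hb1 : 1 < b := hB.trans hBb
  set H : ℝ := b ^ ((L : ℝ) * s) with hHdef
  have hH1 : 1 ≤ H := Real.one_le_rpow hb1.le hLs.le
  have hHB : H = 2 * (B ^ s * B ^ ((N : ℝ) * s)) := by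
    rw [hHdef, hb, Real.mul_rpow hB0.le (by positivity), ← Real.rpow_mul (by norm_num),
      one_div_mul_cancel hLs.ne', Real.rpow_one, ← Real.rpow_add hB0, hLR]
    rw [mul_comm]; congr 2; ring
  have hZH : 32 * H ≤ Z := by rw [hHB]; linarith
  have hZ0 : 0 < Z := by linarith
  -- A bound for the digits of the ordinary blocks.
  obtain ⟨M, hM1, hM⟩ : ∃ M : ℕ, 1 ≤ M ∧ ∀ w ∈ W, ∀ i, ordBlock w i ≤ M := by
    refine ⟨1 + ∑ w ∈ W, ∑ i, (w i : ℕ), by omega, fun w hw i => ?_⟩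
    unfold ordBlock
    split_ifs with hi
    · have h1 := Finset.single_le_sum (f := fun i => (w i : ℕ)) (fun _ _ => Nat.zero_le _)
        (Finset.mem_univ (⟨i, hi⟩ : Fin N))
      have h2 := Finset.single_le_sum (f := fun w : Fin N → ℕ+ => ∑ i, (w i : ℕ))
        (fun _ _ => Nat.zero_le _) hw
      omega
    · omega
  set CL : ℝ := 4 ^ (L + 1) with hCL
  have hgex : ∀ e : ℕ, ∃ k : ℕ, 2 * CL * H * (2 * H) ^ e ≤ 2 ^ k := fun e => by
    obtain ⟨k, hk⟩ := pow_unbounded_of_one_lt (2 * CL * H * (2 * H) ^ e) (one_lt_two (α := ℝ))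
    exact ⟨k, hk.le⟩
  choose g hg using hgex
  have hP : ∀ K, ∃ j ≥ K, ∃ m, m / L = j ∧ Φ (m + 1) ≤ b ^ (m + 1) := by
    intro K
    obtain ⟨n, hn, hn'⟩ := ((hΦ b hBb).and_eventually (eventually_ge_atTop (K * L + 1))).exists
    obtain ⟨m, rfl⟩ : ∃ m, n = m + 1 := ⟨n - 1, by omega⟩
    exact ⟨m / L, (Nat.le_div_iff_mul_le hL0).2 (by omega), m, rfl, hn⟩
  obtain ⟨J, hJP, hJinf, hJadj, hJg⟩ := exists_sparse hP g
  choose! m hmL hmΦ using hJP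
  set r : ℕ → ℕ := fun j => m j % L with hr
  have hrL : ∀ j, r j < L := fun j => Nat.mod_lt _ hL0
  have hmr : ∀ j ∈ J, m j = j * L + r j := by
    intro j hj
    have := Nat.div_add_mod' (m j) L
    rw [hmL j hj] at this
    exact this.symm
  set α : ℕ → ℕ := fun j => ⌈b ^ (m j + 1)⌉₊ with hα
  have hα1 : ∀ j, 1 ≤ α j := fun j => Nat.one_le_ceil_iff.2 (by positivity)
  have hαb : ∀ j, b ^ (m j + 1) ≤ α j := fun j => Nat.le_ceil _
  have hα2 : ∀ j ∈ J, (α j : ℝ) ^ s ≤ 2 * H ^ (j + 1) := by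
    intro j hj
    have h1 : 1 ≤ b ^ (m j + 1) := one_le_pow₀ hb1.le
    have h2 : (α j : ℝ) ≤ 2 * b ^ (m j + 1) := by
      have := Nat.ceil_lt_add_one (a := b ^ (m j + 1)) (by positivity)
      simp only [hα]
      linarith
    have h3 : b ^ (m j + 1) ≤ b ^ ((j + 1) * L) := by
      refine pow_le_pow_right₀ hb1.le ?_
      rw [hmr j hj, add_mul]
      have := hrL j
      omega
    have h4 : (b ^ ((j + 1) * L)) ^ s = H ^ (j + 1) := by
      rw [hHdef, ← Real.rpow_natCast, ← Real.rpow_mul (by positivity), ← Real.rpow_natCast,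
        ← Real.rpow_mul (by positivity)]
      congr 1
      push_cast
      ring
    calc (α j : ℝ) ^ s ≤ (2 * b ^ ((j + 1) * L)) ^ s := by
          gcongr
          linarith
      _ = 2 ^ s * H ^ (j + 1) := by rw [Real.mul_rpow (by norm_num) (by positivity), h4]
      _ ≤ 2 ^ (1 : ℝ) * H ^ (j + 1) := by
          gcongr
          norm_num
      _ = _ := by rw [Real.rpow_one]
  set F : ℕ → Finset (ℕ → ℕ) := fun j =>
    if j ∈ J then (Finset.Ico (α j) (2 * α j)).image (spBlock (r j)) else W.image ordBlock with hF
  set p : ℕ → (ℕ → ℕ) → ℝ := fun j x =>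
    if j ∈ J then (α j : ℝ)⁻¹ else (contQ (pre x N) : ℝ) ^ (-2 * s) / Z with hp
  have hFJ : ∀ j ∈ J, ∀ x ∈ F j, ∃ a, α j ≤ a ∧ a < 2 * α j ∧ x = spBlock (r j) a := by
    intro j hj x hx
    simp only [hF, if_pos hj, Finset.mem_image, Finset.mem_Ico] at hx
    obtain ⟨a, ⟨h1, h2⟩, rfl⟩ := hx
    exact ⟨a, h1, h2, rfl⟩
  have hFW : ∀ j ∉ J, ∀ x ∈ F j, ∃ w ∈ W, x = ordBlock w := by
    intro j hj x hx
    simp only [hF, if_neg hj, Finset.mem_image] at hx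
    obtain ⟨w, hw, rfl⟩ := hx
    exact ⟨w, hw, rfl⟩
  have hp0 : ∀ j x, 0 ≤ p j x := by
    intro j x
    simp only [hp]
    split_ifs <;> positivity
  have hp1 : ∀ j, ∑ x ∈ F j, p j x = 1 := by
    intro j
    by_cases hj : j ∈ J
    · have : ((α j : ℕ) : ℝ) ≠ 0 := by have := hα1 j; positivity
      simp only [hF, hp, if_pos hj]
      rw [Finset.sum_image (fun _ _ _ _ h => spBlock_injective _ h), Finset.sum_const,
        Nat.card_Ico, nsmul_eq_mul, show 2 * α j - α j = α j by omega, mul_inv_cancel₀ this]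
    · simp only [hF, hp, if_neg hj]
      rw [Finset.sum_image (fun _ _ _ _ h => ordBlock_injective h), ← Finset.sum_div]
      simp_rw [pre_ordBlock]
      exact div_self hZ0.ne'
  have hF1 : ∀ j, ∀ x ∈ F j, ∀ i, 1 ≤ x i := by
    intro j x hx i
    by_cases hj : j ∈ J
    · obtain ⟨a, ha, -, rfl⟩ := hFJ j hj x hx
      have := hα1 j
      unfold spBlock
      split_ifs <;> omega
    · obtain ⟨w, hw, rfl⟩ := hFW j hj x hx
      unfold ordBlock
      split_ifs
      · exact (w _).2
      · exact le_rfl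
  have hdet : ∀ j, ∀ x ∈ F j, ∀ y ∈ F j, (∀ i < L, x i = y i) → x = y := by
    intro j x hx y hy hxy
    by_cases hj : j ∈ J
    · obtain ⟨a, -, -, rfl⟩ := hFJ j hj x hx
      obtain ⟨a', -, -, rfl⟩ := hFJ j hj y hy
      have := hxy (r j) (hrL j)
      simp only [spBlock, if_true] at this
      rw [this]
    · obtain ⟨w, -, rfl⟩ := hFW j hj x hx
      obtain ⟨w', -, rfl⟩ := hFW j hj y hy
      congr 1
      funext i
      have := hxy i (by omega)
      simpa [ordBlock] using this
  have hsp1 : ∀ j ∈ J, ∀ x ∈ F j, ∀ i, i ≠ r j → x i = 1 := by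
    intro j hj x hx i hi
    obtain ⟨a, -, -, rfl⟩ := hFJ j hj x hx
    simp [spBlock, hi]
  have hspr : ∀ j ∈ J, ∀ x ∈ F j, α j ≤ x (r j) ∧ x (r j) < 2 * α j := by
    intro j hj x hx
    obtain ⟨a, h1, h2, rfl⟩ := hFJ j hj x hx
    simp [spBlock, h1, h2]
  have hqpos : ∀ ω : ℕ → ℕ → ℕ, (∀ j, ω j ∈ F j) → ∀ n, (1 : ℝ) ≤ contQ (pre (dig L ω) n) :=
    fun ω hω n => by
      exact_mod_cast contQ_pos (one_le_of_mem_pre (fun n => hF1 _ _ (hω _) _) n)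
  have hgrowth : ∀ ω : ℕ → ℕ → ℕ, (∀ j, ω j ∈ F j) →
      (∀ j, (∏ i ∈ Finset.range j, p i (ω i)) *
        (contQ (pre (dig L ω) (j * L)) : ℝ) ^ (2 * s) ≤ 1) ∧
      ∀ j ∈ J, (∏ i ∈ Finset.range j, p i (ω i)) *
        (contQ (pre (dig L ω) (j * L)) : ℝ) ^ (2 * s) * CL * (α j : ℝ) ^ s ≤ 1 := by
    intro ω hω
    have hprod : ∀ j, 0 ≤ ∏ i ∈ Finset.range j, p i (ω i) := fun j =>
      Finset.prod_nonneg fun i _ => hp0 _ _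
    have hω1 : ∀ j i, 1 ≤ ω j i := fun j i => hF1 j _ (hω j) i
    refine growth (H := H) (CL := CL) (g := g) (a := fun j => (α j : ℝ) ^ s)
      (X := fun j => (∏ i ∈ Finset.range j, p i (ω i)) *
        (contQ (pre (dig L ω) (j * L)) : ℝ) ^ (2 * s))
      ?_ hH1 (by positivity) ?_ ?_ ?_ hα2 hg hJg
    · simp [pre]
    · intro j
      have := hprod j
      positivity
    · intro i hi
      obtain ⟨w, hw, hωw⟩ := hFW i hi _ (hω i)
      have hqw : (1 : ℝ) ≤ contQ (pre (ω i) N) := by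
        exact_mod_cast contQ_pos (one_le_of_mem_pre (hω1 i) N)
      have hq : (contQ (pre (dig L ω) ((i + 1) * L)) : ℝ) ≤
          (4 * contQ (pre (ω i) N)) * contQ (pre (dig L ω) (i * L)) := by
        have h1 := contQ_block_succ_le (L := L) hω1 i
        have h2 : contQ (pre (ω i) L) ≤ 2 * contQ (pre (ω i) N) := by
          have h3 : ω i N = 1 := by rw [hωw]; simp [ordBlock]
          have h4 := contQ_concat_le (one_le_of_mem_pre (hω1 i) N) (ω i N)
          rw [← pre_succ, h3, ← hL] at h4
          exact h4
        have h5 : contQ (pre (dig L ω) ((i + 1) * L)) ≤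
            (4 * contQ (pre (ω i) N)) * contQ (pre (dig L ω) (i * L)) := by
          calc _ ≤ _ := h1
            _ ≤ 2 * contQ (pre (dig L ω) (i * L)) * (2 * contQ (pre (ω i) N)) := by gcongr
            _ = _ := by ring
        exact_mod_cast h5
      rw [Finset.prod_range_succ]
      refine (mass_step hs.le (hprod i) (hp0 i _) (by positivity) (by positivity) (by positivity)
        hq).trans ?_
      rw [div_eq_mul_inv]
      have hX0 := hprod i
      gcongr
      simp only [hp, if_neg hi]
      rw [Real.mul_rpow (by norm_num) (by positivity), neg_mul, Real.rpow_neg (by positivity)]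
      have h6 : (4 : ℝ) ^ (2 * s) ≤ 16 := by
        calc (4 : ℝ) ^ (2 * s) ≤ 4 ^ (2 : ℝ) :=
              Real.rpow_le_rpow_of_exponent_le (by norm_num) (by linarith)
          _ = 16 := by norm_num
      have h7 : 0 < (contQ (pre (ω i) N) : ℝ) ^ (2 * s) := by positivity
      calc _ = (4 : ℝ) ^ (2 * s) / Z := by field_simp
        _ ≤ 16 / (32 * H) := by gcongr
        _ = (2 * H)⁻¹ := by field_simp; norm_num
    · intro i hi
      have hα0 : (1 : ℝ) ≤ α i := by exact_mod_cast hα1 i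
      have hq : (contQ (pre (dig L ω) ((i + 1) * L)) : ℝ) ≤
          (2 ^ (L + 1) * α i) * contQ (pre (dig L ω) (i * L)) := by
        have h1 := contQ_block_succ_le (L := L) hω1 i
        have h2 := contQ_pre_special_le (hω1 i) (hα1 i) (hsp1 i hi _ (hω i))
          (hspr i hi _ (hω i)).2 L
        have h5 : contQ (pre (dig L ω) ((i + 1) * L)) ≤
            (2 ^ (L + 1) * α i) * contQ (pre (dig L ω) (i * L)) := by
          calc _ ≤ _ := h1
            _ ≤ 2 * contQ (pre (dig L ω) (i * L)) * (2 ^ L * α i) := by gcongr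
            _ = _ := by ring
        exact_mod_cast h5
      rw [Finset.prod_range_succ]
      refine (mass_step hs.le (hprod i) (hp0 i _) (by positivity) (by positivity) (by positivity)
        hq).trans ?_
      rw [mul_assoc _ CL]
      have hX0 := hprod i
      refine mul_le_mul_of_nonneg_left ?_ (by positivity)
      simp only [hp, if_pos hi]
      rw [Real.mul_rpow (by positivity) (by positivity)]
      have h6 : ((2 : ℝ) ^ (L + 1)) ^ (2 * s) ≤ CL := by
        calc ((2 : ℝ) ^ (L + 1)) ^ (2 * s) ≤ ((2 : ℝ) ^ (L + 1)) ^ (2 : ℝ) :=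
              Real.rpow_le_rpow_of_exponent_le (one_le_pow₀ (by norm_num)) (by linarith)
          _ = CL := by
              rw [Real.rpow_two, ← pow_mul, mul_comm, pow_mul, hCL]; norm_num
      have h7 : (α i : ℝ)⁻¹ * (α i : ℝ) ^ (2 * s) ≤ (α i : ℝ) ^ s := by
        rw [← Real.rpow_neg_one, ← Real.rpow_add (by positivity)]
        exact Real.rpow_le_rpow_of_exponent_le hα0 (by linarith)
      calc _ = ((2 : ℝ) ^ (L + 1)) ^ (2 * s) * ((α i : ℝ)⁻¹ * (α i : ℝ) ^ (2 * s)) := by ring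
        _ ≤ _ := by gcongr
  have hdim := dim_of_blocks (L := L) (F := F) (p := p) (M := M) (J := J) (r := r) (α := α)
    hs hs1 hL0 hM1 hp0 hp1 hF1 hdet ?_ ?_ hα1 hsp1 (fun j hj x hx => (hspr j hj x hx).2) ?_ hJadj
    ?_ ?_
  rotate_left
  · intro j hj x hx i
    obtain ⟨w, hw, rfl⟩ := hFW j hj x hx
    exact hM w hw i
  · intro j hj x hx
    obtain ⟨w, hw, rfl⟩ := hFW j hj x hx
    simp [ordBlock, hL]
  · intro j hj x _
    simp [hp, hj]
  · intro ω hω j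
    have h1 := (hgrowth ω hω).1 j
    have h2 := hqpos ω hω (j * L)
    rw [neg_mul, Real.rpow_neg (by positivity), ← one_div, le_div_iff₀ (by positivity)]
    exact h1
  · intro ω hω j hj
    have h1 := (hgrowth ω hω).2 j hj
    have h2 := hqpos ω hω (j * L)
    have hα0 : (1 : ℝ) ≤ α j := by exact_mod_cast hα1 j
    rw [neg_mul, Real.rpow_neg (by positivity), Real.rpow_neg (by positivity), ← mul_inv,
      ← one_div, le_div_iff₀ (by positivity), Real.mul_rpow (by positivity) (by positivity)]
    have h6 : ((2 : ℝ) ^ L) ^ (2 * s) ≤ CL := by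
      calc ((2 : ℝ) ^ L) ^ (2 * s) ≤ ((2 : ℝ) ^ L) ^ (2 : ℝ) :=
            Real.rpow_le_rpow_of_exponent_le (one_le_pow₀ (by norm_num)) (by linarith)
        _ = 4 ^ L := by
            rw [Real.rpow_two, ← pow_mul, mul_comm, pow_mul]; norm_num
        _ ≤ CL := pow_le_pow_right₀ (by norm_num) (by omega)
    have hprod : 0 ≤ ∏ i ∈ Finset.range j, p i (ω i) := Finset.prod_nonneg fun i _ => hp0 _ _
    refine le_trans ?_ h1
    calc _ ≤ (∏ i ∈ Finset.range j, p i (ω i)) *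
          (CL * (contQ (pre (dig L ω) (j * L)) : ℝ) ^ (2 * s) * (α j : ℝ) ^ s) := by gcongr
      _ = _ := by ring
  -- The rational points are discarded: they form a set of dimension zero.
  have hsub : (fun ω => cfLim (dig L ω)) '' {ω | ∀ j, ω j ∈ F j} ⊆
      E1 Φ ∪ Set.range ((↑) : ℚ → ℝ) := by
    rintro _ ⟨ω, hω, rfl⟩
    have hd : ∀ n, 1 ≤ dig L ω n := fun n => hF1 _ _ (hω _) _
    by_cases hirr : Irrational (cfLim (dig L ω))
    · left
      refine ⟨⟨(cfLim_pos hd).le, cfLim_lt_one hd⟩, hirr, ?_⟩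
      rw [frequently_atTop]
      intro K
      obtain ⟨j, hj, hKj⟩ := hJinf K
      refine ⟨m j + 1, ?_, ?_⟩
      · rw [hmr j hj]
        have : j ≤ j * L := Nat.le_mul_of_pos_right _ hL0
        omega
      · rw [cfA_cfLim hd, hmr j hj, dig_mul_add _ _ (hrL j), ← hmr j hj]
        refine (hmΦ j hj).trans ((hαb j).trans ?_)
        exact_mod_cast (hspr j hj _ (hω j)).1
    · right
      rwa [Irrational, not_not] at hirr
  refine hdim.trans ((dimH_mono hsub).trans ?_)
  rw [dimH_union, dimH_countable (Set.countable_range _)]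
  simp

/-! ### The dimension formula -/

theorem dimH_E1_of_one_lt_B (Φ : ℕ → ℝ) (hΦ : ∀ n, 0 < Φ n) (B : ℝ) (hB : 1 < B)
    (hlogB : (Real.log B : EReal) =
      liminf (fun n : ℕ => ((Real.log (Φ n) / n : ℝ) : EReal)) atTop) :
    dimH (E1 Φ) = ENNReal.ofReal (presInf B (fun s => s)) := by
  have hB0 : 0 < B := by linarith
  set A : Set ℝ := {s : ℝ | 0 ≤ s ∧ ∃ P : EReal, P ≤ 0 ∧
    Tendsto (fun n : ℕ => (((n : ℝ)⁻¹ : ℝ) : EReal) * ENNReal.log (presSum B s s n))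
      atTop (nhds P)} with hA
  change dimH (E1 Φ) = ENNReal.ofReal (sInf A)
  have h1A : (1 : ℝ) ∈ A :=
    ⟨zero_le_one, pressure_of_bounded hB0 zero_le_one (by simp) (presSum_one_le hB)⟩
  have hbdd : BddBelow A := ⟨0, fun s hs => hs.1⟩
  have hA1 : sInf A ≤ 1 := csInf_le hbdd h1A
  apply le_antisymm
  · refine le_of_forall_gt_imp_ge_of_dense fun c hc => ?_
    rcases eq_or_ne c ⊤ with rfl | hctop
    · exact le_top
    obtain ⟨s', rfl⟩ : ∃ s' : ℝ, c = ENNReal.ofReal s' :=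
      ⟨c.toReal, (ENNReal.ofReal_toReal hctop).symm⟩
    obtain ⟨hlt, hs'⟩ := ENNReal.ofReal_lt_ofReal_iff'.1 hc
    obtain ⟨s, ⟨hs0, hsP⟩, hss'⟩ := exists_lt_of_csInf_lt ⟨1, h1A⟩ hlt
    obtain ⟨θ, hθ0, hθ1, N₀, hN₀⟩ := exists_summable hB hs0 hss' hsP
    refine dimH_E1_le (b := B ^ θ) (Real.one_lt_rpow hB hθ0) hs' ?_ hN₀
    have hlogpos : 0 < Real.log B := Real.log_pos hB
    have h1 : ((θ * Real.log B : ℝ) : EReal) <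
        liminf (fun n : ℕ => ((Real.log (Φ n) / n : ℝ) : EReal)) atTop := by
      rw [← hlogB]
      exact_mod_cast (by nlinarith : θ * Real.log B < Real.log B)
    filter_upwards [eventually_lt_of_lt_liminf h1, eventually_gt_atTop 0] with n hn hn0
    have hn' : θ * Real.log B < Real.log (Φ n) / n := by exact_mod_cast hn
    have hn0' : (0 : ℝ) < n := by exact_mod_cast hn0
    rw [lt_div_iff₀ hn0'] at hn'
    rw [← Real.log_le_log_iff (by positivity) (hΦ n), Real.log_pow, Real.log_rpow hB0]
    linarith
  · refine le_of_forall_lt_imp_le_of_dense fun c hc => ?_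
    obtain ⟨s, rfl⟩ : ∃ s : ℝ, c = ENNReal.ofReal s :=
      ⟨c.toReal, (ENNReal.ofReal_toReal hc.ne_top).symm⟩
    rcases le_or_gt s 0 with hs0 | hs0
    · simp [ENNReal.ofReal_of_nonpos hs0]
    have hlt := (ENNReal.ofReal_lt_ofReal_iff'.1 hc).1
    refine le_dimH_E1 hB hs0 (by linarith) (fun hP => ?_) ?_
    · exact absurd (csInf_le hbdd (show s ∈ A from ⟨hs0.le, hP⟩)) (not_le.2 hlt)
    · intro b hb
      have h1 : liminf (fun n : ℕ => ((Real.log (Φ n) / n : ℝ) : EReal)) atTop <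
          ((Real.log b : ℝ) : EReal) := by
        rw [← hlogB]
        exact_mod_cast Real.log_lt_log hB0 hb
      have hb0 : 0 < b := by linarith
      refine ((frequently_lt_of_liminf_lt (by isBoundedDefault) h1).and_eventually
        (eventually_gt_atTop 0)).mono ?_
      rintro n ⟨hn, hn0⟩
      have hn' : Real.log (Φ n) / n < Real.log b := by exact_mod_cast hn
      have hn0' : (0 : ℝ) < n := by exact_mod_cast hn0
      rw [div_lt_iff₀ hn0'] at hn'
      rw [← Real.log_le_log_iff (hΦ n) (by positivity), Real.log_pow]
      linarith
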